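/- arXiv:1706.04048 — 2 statements merged into one kernel-verified Lean document; each statement's English description precedes it below -/
import Mathlib

section
/- Let ν, η : ℝ → ℝⁿ → ℝⁿ be time-dependent vector fields such that for each t ∈ [0,1] the maps ν(t,·) and η(t,·) are continuously differentiable, bounded by b(t), and have spatial derivatives bounded by ℓ(t), with ℓ, b integrable on [0,1] and measurable dependence on t. For each ε ∈ ℝ let φ^ε(s,t,x) denote the value at time t of the unique solution of ψ(t) = x + ∫_s^t (ν + εη)(r, ψ(r)) dr, and write φ = φ⁰; assume each map x ↦ φ(s,t,x) is continuously differentiable with spatial derivative Dφ(s,t,·). Then for all s, t ∈ [0,1] and x ∈ ℝⁿ, the map ε ↦ φ^ε(s,t,x) is differentiable at ε = 0 with derivative ∫_s^t Dφ(τ,t, φ(s,τ,x)) ( η(τ, φ(s,τ,x)) ) dτ. -/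
open MeasureTheory Set Filter

open scoped NNReal Topology

/-!
Let `C` be the exponential of the integral of the Lipschitz constants of `ν`. By Grönwall, two
solutions whose velocities differ by a forcing term `g` separate by at most `C ∫ ‖g‖`. Hence, if `ψ`
solves `dψ/dt = ν(t, ψ) + g`, then `Φ σ τ (ψ σ) - ψ τ = -∫ q in σ..τ, g q` up to an error
`O(∫ ‖g‖ · ∫ K)`, where `Φ` is the flow of `ν` and `K` the Lipschitz constant. At almost every `τ`
this error is `o(σ - τ)`, so the absolutely continuous curve `σ ↦ Φ σ t (ψ σ) = Φ τ t (Φ σ τ (ψ σ))`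
has derivative `DΦ(τ,t)(ψ τ) (g τ)` there. Integrating gives the Alekseev–Gröbner formula
`ψ t - Φ s t (ψ s) = ∫ τ in s..t, DΦ(τ,t)(ψ τ) (g τ)`. For `g = ε η(·, φ^ε)` divide by `ε` and let
`ε → 0` by dominated convergence, using `‖DΦ‖ ≤ C`.
-/

section AbsoluteContinuity

variable {X Y E F : Type*} [PseudoMetricSpace X] [PseudoMetricSpace Y] [NormedAddCommGroup E]
  [NormedSpace ℝ E] [NormedAddCommGroup F] [NormedSpace ℝ F] {a b C : ℝ}

theorem absolutelyContinuousOnInterval_of_dist_le_mul {f : ℝ → X} {g : ℝ → Y}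
    (hg : AbsolutelyContinuousOnInterval g a b)
    (h : ∀ x ∈ uIcc a b, ∀ y ∈ uIcc a b, dist (f x) (f y) ≤ C * dist (g x) (g y)) :
    AbsolutelyContinuousOnInterval f a b := by
  refine squeeze_zero' (.of_forall fun _ => Finset.sum_nonneg fun _ _ => dist_nonneg) ?_
    (by simpa only [mul_zero] using Tendsto.const_mul C hg)
  filter_upwards [mem_inf_of_right (mem_principal_self _)] with S hS
  rw [Finset.mul_sum]
  exact Finset.sum_le_sum fun i hi => h _ (hS.1 i hi).1 _ (hS.1 i hi).2

theorem absolutelyContinuousOnInterval_contDiff_comp [ProperSpace E] {f : E → F} {g : ℝ → E}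
    (hf : ContDiff ℝ 1 f) (hg : AbsolutelyContinuousOnInterval g a b) :
    AbsolutelyContinuousOnInterval (fun x => f (g x)) a b := by
  obtain ⟨R, hR⟩ := hg.exists_bound
  obtain ⟨L, hL⟩ := hf.contDiffOn.exists_lipschitzOnWith one_ne_zero
    (convex_closedBall (0 : E) R) (isCompact_closedBall 0 R)
  have hmem (x : ℝ) (hx : x ∈ uIcc a b) : g x ∈ Metric.closedBall 0 R :=
    mem_closedBall_zero_iff.2 (hR x hx)
  exact absolutelyContinuousOnInterval_of_dist_le_mul hg fun x hx y hy =>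
    hL.dist_le_mul _ (hmem x hx) _ (hmem y hy)

theorem absolutelyContinuousOnInterval_of_dist_le_integral {f : ℝ → X} {k : ℝ → ℝ}
    (hk : IntervalIntegrable k volume a b)
    (h : ∀ x ∈ uIcc a b, ∀ y ∈ uIcc a b, dist (f x) (f y) ≤ C * |∫ q in y..x, k q|) :
    AbsolutelyContinuousOnInterval f a b := by
  have hk_left (x : ℝ) (hx : x ∈ uIcc a b) : IntervalIntegrable k volume a x :=
    hk.mono_set (uIcc_subset_uIcc left_mem_uIcc hx)
  refine absolutelyContinuousOnInterval_of_dist_le_mul (C := C)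
    (hk.absolutelyContinuousOnInterval_intervalIntegral left_mem_uIcc) fun x hx y hy => ?_
  rw [Real.dist_eq, intervalIntegral.integral_interval_sub_left (hk_left x hx) (hk_left y hy)]
  exact h x hx y hy

theorem absolutelyContinuousOnInterval_integral {f : ℝ → E}
    (hf : IntervalIntegrable f volume a b) :
    AbsolutelyContinuousOnInterval (fun x => ∫ q in a..x, f q) a b := by
  have hf_left (x : ℝ) (hx : x ∈ uIcc a b) : IntervalIntegrable f volume a x :=
    hf.mono_set (uIcc_subset_uIcc left_mem_uIcc hx)
  refine absolutelyContinuousOnInterval_of_dist_le_integral (C := 1) hf.norm fun x hx y hy => ?_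
  rw [one_mul, dist_eq_norm,
    intervalIntegral.integral_interval_sub_left (hf_left x hx) (hf_left y hy)]
  exact intervalIntegral.norm_integral_le_abs_integral_norm

theorem integral_eq_sub_of_ae_hasDerivAt [CompleteSpace E] {f f' : ℝ → E}
    (hf : AbsolutelyContinuousOnInterval f a b) (hf' : IntervalIntegrable f' volume a b)
    (hderiv : ∀ᵐ x, x ∈ uIcc a b → HasDerivAt f (f' x) x) :
    ∫ x in a..b, f' x = f b - f a := by
  obtain ⟨c, hc⟩ := (hf.fun_sub
    (absolutelyContinuousOnInterval_integral hf')).const_of_ae_hasDerivAt_zero (by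
      filter_upwards [hderiv, hf'.ae_hasDerivAt_integral] with x hfx hintx hx
      simpa only [sub_self] using (hfx hx).fun_sub (hintx hx a left_mem_uIcc))
  have hca : f a = c := by simpa using hc a left_mem_uIcc
  rw [hca, ← hc b right_mem_uIcc, sub_sub_cancel]

theorem right_le_left_of_ae_deriv_nonpos {f : ℝ → ℝ} (hab : a ≤ b)
    (hf : AbsolutelyContinuousOnInterval f a b) (hderiv : ∀ᵐ x, x ∈ Icc a b → deriv f x ≤ 0) :
    f b ≤ f a := by
  have hnonpos : ∫ x in a..b, deriv f x ≤ 0 := by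
    rw [intervalIntegral.integral_of_le hab, ← integral_Icc_eq_integral_Ioc]
    exact integral_nonpos_of_ae ((ae_restrict_iff' measurableSet_Icc).2 hderiv)
  linarith [hf.integral_deriv_eq_sub]

end AbsoluteContinuity

section Gronwall

variable {s t A : ℝ} {u k : ℝ → ℝ}

-- The function `(A + ∫ q in s..r, k q * u q) * exp (-∫ q in s..r, k q)` of `r` is nonincreasing.
theorem le_mul_exp_integral_of_le_add_integral (hst : s ≤ t)
    (hk : IntervalIntegrable k volume s t) (hk_nonneg : ∀ r ∈ Icc s t, 0 ≤ k r)
    (hu : ContinuousOn u (Icc s t))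
    (h : ∀ r ∈ Icc s t, u r ≤ A + ∫ q in s..r, k q * u q) :
    u t ≤ A * Real.exp (∫ q in s..t, k q) := by
  rw [← uIcc_of_le hst] at hu
  have hku : IntervalIntegrable (fun q => k q * u q) volume s t := hk.mul_continuousOn hu
  set g : ℝ → ℝ := fun r => A + ∫ q in s..r, k q * u q with hg
  set e : ℝ → ℝ := fun r => Real.exp (-∫ q in s..r, k q) with he
  have hg_ac : AbsolutelyContinuousOnInterval g s t :=
    absolutelyContinuousOnInterval_contDiff_comp (f := fun y => A + y) (by fun_prop)
      (absolutelyContinuousOnInterval_integral hku)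
  have he_ac : AbsolutelyContinuousOnInterval e s t :=
    absolutelyContinuousOnInterval_contDiff_comp (f := fun y => Real.exp (-y)) (by fun_prop)
      (absolutelyContinuousOnInterval_integral hk)
  have hderiv : ∀ᵐ r, r ∈ Icc s t → deriv (fun q => g q * e q) r ≤ 0 := by
    filter_upwards [hk.ae_hasDerivAt_integral, hku.ae_hasDerivAt_integral] with r hkr hkur hr
    have hr' : r ∈ uIcc s t := by rwa [uIcc_of_le hst]
    have hg_deriv : HasDerivAt g (k r * u r) r := (hkur hr' s left_mem_uIcc).const_add A
    have he_deriv : HasDerivAt e (e r * -k r) r := (hkr hr' s left_mem_uIcc).fun_neg.exp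
    rw [(hg_deriv.fun_mul he_deriv).deriv]
    calc k r * u r * e r + g r * (e r * -k r) = k r * e r * (u r - g r) := by ring
      _ ≤ 0 := mul_nonpos_of_nonneg_of_nonpos (mul_nonneg (hk_nonneg r hr) (Real.exp_nonneg _))
        (sub_nonpos.2 (h r hr))
  have hge : g t * e t ≤ A := by
    simpa [hg, he] using right_le_left_of_ae_deriv_nonpos hst (hg_ac.fun_mul he_ac) hderiv
  calc u t ≤ g t := h t (right_mem_Icc.2 hst)
    _ = g t * e t * Real.exp (∫ q in s..t, k q) := by
      rw [he, mul_assoc, ← Real.exp_add, neg_add_cancel, Real.exp_zero, mul_one]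
    _ ≤ A * Real.exp (∫ q in s..t, k q) := by gcongr

theorem le_mul_exp_abs_integral_of_le_add_abs_integral
    (hk : IntervalIntegrable k volume s t) (hk_nonneg : ∀ r ∈ uIcc s t, 0 ≤ k r)
    (hu : ContinuousOn u (uIcc s t)) (hu_nonneg : ∀ r ∈ uIcc s t, 0 ≤ u r)
    (h : ∀ r ∈ uIcc s t, u r ≤ A + |∫ q in s..r, k q * u q|) :
    u t ≤ A * Real.exp |∫ q in s..t, k q| := by
  wlog hst : s ≤ t generalizing s t u k
  · have hneg : MapsTo Neg.neg (uIcc (-s) (-t)) (uIcc s t) := fun r hr => by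
      rwa [← Set.mem_neg, Set.neg_uIcc]
    have hreflect := this (s := -s) (t := -t) (u := fun q => u (-q)) (k := fun q => k (-q))
      ((IntervalIntegrable.iff_comp_neg (by simp)).1 hk) (fun r hr => hk_nonneg _ (hneg hr))
      (hu.comp continuous_neg.continuousOn hneg) (fun r hr => hu_nonneg _ (hneg hr))
      (fun r hr => by
        rw [intervalIntegral.integral_comp_neg (fun q => k q * u q), neg_neg,
          intervalIntegral.integral_symm, abs_neg]
        exact h _ (hneg hr))
      (by linarith)
    rwa [intervalIntegral.integral_comp_neg k, neg_neg, neg_neg, intervalIntegral.integral_symm,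
      abs_neg] at hreflect
  rw [uIcc_of_le hst] at hk_nonneg hu hu_nonneg h
  rw [abs_of_nonneg (intervalIntegral.integral_nonneg hst hk_nonneg)]
  refine le_mul_exp_integral_of_le_add_integral hst hk hk_nonneg hu fun r hr => ?_
  have hint_nonneg : 0 ≤ ∫ q in s..r, k q * u q := intervalIntegral.integral_nonneg hr.1
    fun q hq => have hq' : q ∈ Icc s t := Icc_subset_Icc_right hr.2 hq
      mul_nonneg (hk_nonneg q hq') (hu_nonneg q hq')
  simpa only [abs_of_nonneg hint_nonneg] using h r hr

end Gronwall

section Superposition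

variable {α X Y : Type*} [MeasurableSpace α] {μ : Measure α} [TopologicalSpace Y]
  [TopologicalSpace.PseudoMetrizableSpace Y] {f : α → X → Y}

theorem aestronglyMeasurable_apply_simpleFunc (hf : ∀ x, AEStronglyMeasurable (fun t => f t x) μ)
    (p : SimpleFunc α X) : AEStronglyMeasurable (fun t => f t (p t)) μ := by
  have hcover : ⋃ x : p.range, p ⁻¹' {x.1} = univ := by
    ext t
    simp
  rw [← Measure.restrict_univ (μ := μ), ← hcover, aestronglyMeasurable_iUnion_iff]
  intro x
  refine (hf x.1).restrict.congr ?_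
  filter_upwards [ae_restrict_mem (p.measurableSet_fiber x.1)] with t ht
  rw [show p t = x.1 from ht]

theorem aestronglyMeasurable_apply_of_ae_continuous [TopologicalSpace X] {ψ : α → X}
    (hf : ∀ x, AEStronglyMeasurable (fun t => f t x) μ) (hf_cont : ∀ᵐ t ∂μ, Continuous (f t))
    (hψ : AEStronglyMeasurable ψ μ) : AEStronglyMeasurable (fun t => f t (ψ t)) μ := by
  have hmk := hψ.stronglyMeasurable_mk
  refine aestronglyMeasurable_of_tendsto_ae atTop
    (fun j => aestronglyMeasurable_apply_simpleFunc hf (hmk.approx j)) ?_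
  filter_upwards [hψ.ae_eq_mk, hf_cont] with t hψt hft
  rw [hψt]
  exact (hft.tendsto _).comp (hmk.tendsto_approx t)

theorem integrableOn_apply_of_continuousOn {E : Type*} [TopologicalSpace X]
    [TopologicalSpace.PseudoMetrizableSpace X] [NormedAddCommGroup E] {f : ℝ → X → E}
    {ψ : ℝ → X} {b : ℝ → ℝ} {I : Set ℝ} (hI : MeasurableSet I)
    (hf : ∀ x, AEStronglyMeasurable (fun t => f t x) (volume.restrict I))
    (hf_cont : ∀ t ∈ I, Continuous (f t)) (hf_le : ∀ t ∈ I, ∀ x, ‖f t x‖ ≤ b t)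
    (hb : IntegrableOn b I) (hψ : ContinuousOn ψ I) :
    IntegrableOn (fun t => f t (ψ t)) I :=
  Integrable.mono' hb
    (aestronglyMeasurable_apply_of_ae_continuous hf (ae_restrict_of_forall_mem hI hf_cont)
      (hψ.aestronglyMeasurable hI))
    (ae_restrict_of_forall_mem hI fun t ht => hf_le t ht _)

end Superposition

section IntervalIntegrals

variable {E : Type*} [NormedAddCommGroup E] {I : Set ℝ} [I.OrdConnected] {f : ℝ → E} {a b : ℝ}

theorem intervalIntegrable_of_integrableOn_ordConnected (hf : IntegrableOn f I) (ha : a ∈ I)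
    (hb : b ∈ I) : IntervalIntegrable f volume a b :=
  (hf.mono_set (OrdConnected.uIcc_subset ‹_› ha hb)).intervalIntegrable

theorem abs_integral_le_setIntegral_of_ordConnected {k : ℝ → ℝ} (hk : IntegrableOn k I)
    (hk_nonneg : ∀ r, 0 ≤ k r) (ha : a ∈ I) (hb : b ∈ I) : |∫ q in a..b, k q| ≤ ∫ q in I, k q := by
  rw [intervalIntegral.abs_integral_eq_abs_integral_uIoc, abs_of_nonneg (integral_nonneg hk_nonneg)]
  exact setIntegral_mono_set hk (.of_forall hk_nonneg)
    (uIoc_subset_uIcc.trans (OrdConnected.uIcc_subset ‹_› ha hb)).eventuallyLE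

theorem abs_integral_le_abs_integral_of_mem_uIcc {k : ℝ → ℝ} (hk : IntervalIntegrable k volume a b)
    (hk_nonneg : ∀ r, 0 ≤ k r) {r : ℝ} (hr : r ∈ uIcc a b) :
    |∫ q in a..r, k q| ≤ |∫ q in a..b, k q| :=
  intervalIntegral.abs_integral_mono_interval
    (uIoc_subset_uIoc_of_uIcc_subset_uIcc (uIcc_subset_uIcc_left hr)) (.of_forall hk_nonneg) hk

variable (I) in
theorem ae_mem_nhds_of_mem_ordConnected : ∀ᵐ τ, τ ∈ I → I ∈ 𝓝 τ := by
  have hfrontier : volume (frontier I) = 0 :=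
    (OrdConnected.convex ‹_›).addHaar_frontier volume
  filter_upwards [measure_eq_zero_iff_ae_notMem.1 hfrontier] with τ hτ hτI
  exact mem_interior_iff_mem_nhds.1 (by_contra fun hint => hτ ⟨subset_closure hτI, hint⟩)

end IntervalIntegrals

section Derivative

variable {E : Type*} [NormedAddCommGroup E] [NormedSpace ℝ E]

theorem hasDerivAt_of_isBigO_mul_sub {p P : ℝ → E} {N L : ℝ → ℝ} {P' : E} {N' τ : ℝ}
    (hP : HasDerivAt P P' τ) (hN : HasDerivAt N N' τ) (hL : ContinuousAt L τ)
    (h : (fun σ => p σ - p τ - (P σ - P τ)) =O[𝓝 τ] fun σ => (N σ - N τ) * (L σ - L τ)) :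
    HasDerivAt p P' τ := by
  have hL_zero : (fun σ => L σ - L τ) =o[𝓝 τ] fun _ => (1 : ℝ) := by
    rw [Asymptotics.isLittleO_one_iff]
    simpa only [sub_self] using hL.tendsto.sub_const (L τ)
  have hsmall : (fun σ => p σ - p τ - (P σ - P τ)) =o[𝓝 τ] fun σ => σ - τ := by
    simpa only [mul_one] using h.trans_isLittleO (hN.isBigO_sub.mul_isLittleO hL_zero)
  rw [hasDerivAt_iff_isLittleO] at hP ⊢
  exact (hsmall.add hP).congr_left fun σ => by abel

end Derivative

/-- `ψ` is a Carathéodory solution of `dψ/dt = ν(t, ψ)` on the time set `I`: it is continuous, and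
its increments are the integrals of the velocity along it. Integrability of that velocity
is required separately, since the integral of a nonintegrable function is `0`. -/
structure IsCaratheodorySolution {E : Type*} [NormedAddCommGroup E] [NormedSpace ℝ E]
    (ν : ℝ → E → E) (I : Set ℝ) (ψ : ℝ → E) : Prop where
  continuousOn : ContinuousOn ψ I
  integrableOn : IntegrableOn (fun r => ν r (ψ r)) I
  integral_eq_sub : ∀ σ ∈ I, ∀ τ ∈ I, ∫ r in σ..τ, ν r (ψ r) = ψ τ - ψ σ

/-- `Φ s t x` is the value at time `t` of a Carathéodory solution of `dψ/dt = ν(t, ψ)` on `I` that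
passes through `x` at time `s`. -/
structure IsCaratheodoryFlow {E : Type*} [NormedAddCommGroup E] [NormedSpace ℝ E]
    (ν : ℝ → E → E) (I : Set ℝ) (Φ : ℝ → ℝ → E → E) : Prop where
  self : ∀ s ∈ I, ∀ x, Φ s s x = x
  isSolution : ∀ s ∈ I, ∀ x, IsCaratheodorySolution ν I fun t => Φ s t x

/-- The Carathéodory uniqueness condition: the fields `ν t`, `t ∈ I`, are Lipschitz with constants
`K t` that are integrable in time. -/
structure IsIntegrablyLipschitz {E : Type*} [NormedAddCommGroup E]
    (ν : ℝ → E → E) (K : ℝ → ℝ≥0) (I : Set ℝ) : Prop where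
  integrableOn : IntegrableOn (fun t => (K t : ℝ)) I
  lipschitzWith : ∀ t ∈ I, LipschitzWith (K t) (ν t)

section CaratheodoryFlows

variable {E : Type*} [NormedAddCommGroup E] [NormedSpace ℝ E] {I : Set ℝ}
  {ν : ℝ → E → E} {K : ℝ → ℝ≥0} {g ψ χ : ℝ → E} {Φ : ℝ → ℝ → E → E} {s t σ τ : ℝ}

theorem IsCaratheodorySolution.freeze_perturbation {ζ : ℝ → E → E}
    (hψ : IsCaratheodorySolution (fun r y => ν r y + ζ r y) I ψ) :
    IsCaratheodorySolution (fun r y => ν r y + ζ r (ψ r)) I ψ where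
  __ := hψ

theorem IsIntegrablyLipschitz.of_norm_fderiv_le {ℓ : ℝ → ℝ} (hℓ : IntegrableOn ℓ I)
    (hν : ∀ t ∈ I, Differentiable ℝ (ν t)) (hν_le : ∀ t ∈ I, ∀ y, ‖fderiv ℝ (ν t) y‖ ≤ ℓ t) :
    IsIntegrablyLipschitz ν (fun t => (ℓ t).toNNReal) I where
  integrableOn := hℓ.real_toNNReal
  lipschitzWith t ht := lipschitzWith_of_nnnorm_fderiv_le (hν t ht) fun y =>
    NNReal.le_toNNReal_of_coe_le (hν_le t ht y)

variable [I.OrdConnected]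

theorem IsIntegrablyLipschitz.norm_integral_sub_le {w : ℝ → ℝ}
    (hν : IsIntegrablyLipschitz ν K I) (hσ : σ ∈ I) (hτ : τ ∈ I)
    (hw : ContinuousOn w (uIcc σ τ)) (hψχ : ∀ q ∈ uIcc σ τ, ‖ψ q - χ q‖ ≤ w q) :
    ‖∫ q in σ..τ, (ν q (ψ q) - ν q (χ q))‖ ≤ |∫ q in σ..τ, K q * w q| := by
  have hK := intervalIntegrable_of_integrableOn_ordConnected hν.integrableOn hσ hτ
  refine intervalIntegral.norm_integral_le_abs_of_norm_le
    (ae_restrict_of_forall_mem measurableSet_uIoc fun q hq => ?_) (hK.mul_continuousOn hw)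
  have hq' : q ∈ uIcc σ τ := uIoc_subset_uIcc hq
  calc ‖ν q (ψ q) - ν q (χ q)‖ ≤ K q * ‖ψ q - χ q‖ :=
        (hν.lipschitzWith q (OrdConnected.uIcc_subset ‹_› hσ hτ hq')).norm_sub_le _ _
    _ ≤ K q * w q := by gcongr; exact hψχ q hq'

namespace IsCaratheodorySolution

theorem of_eq_add_integral {x : E} (hψ : ContinuousOn ψ I)
    (hint : IntegrableOn (fun r => ν r (ψ r)) I) (hs : s ∈ I)
    (h : ∀ t ∈ I, ψ t = x + ∫ r in s..t, ν r (ψ r)) : IsCaratheodorySolution ν I ψ where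
  continuousOn := hψ
  integrableOn := hint
  integral_eq_sub σ hσ τ hτ := by
    rw [h τ hτ, h σ hσ, add_sub_add_left_eq_sub, intervalIntegral.integral_interval_sub_left
      (intervalIntegrable_of_integrableOn_ordConnected hint hs hτ)
      (intervalIntegrable_of_integrableOn_ordConnected hint hs hσ)]

theorem integral_sub_eq (hψ : IsCaratheodorySolution (fun r y => ν r y + g r) I ψ)
    (hχ : IsCaratheodorySolution ν I χ) (hg : IntegrableOn g I) (hσ : σ ∈ I) (hτ : τ ∈ I) :
    ∫ r in σ..τ, (ν r (ψ r) - ν r (χ r)) = ψ τ - χ τ - (ψ σ - χ σ) - ∫ r in σ..τ, g r := by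
  have hgI := intervalIntegrable_of_integrableOn_ordConnected hg hσ hτ
  have hψI := intervalIntegrable_of_integrableOn_ordConnected hψ.integrableOn hσ hτ
  have hχI := intervalIntegrable_of_integrableOn_ordConnected hχ.integrableOn hσ hτ
  calc ∫ r in σ..τ, (ν r (ψ r) - ν r (χ r))
      = ∫ r in σ..τ, (ν r (ψ r) + g r - ν r (χ r) - g r) := by
        refine intervalIntegral.integral_congr fun r _ => ?_
        abel
    _ = ψ τ - ψ σ - (χ τ - χ σ) - ∫ r in σ..τ, g r := by
        rw [intervalIntegral.integral_sub (hψI.sub hχI) hgI,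
          intervalIntegral.integral_sub hψI hχI, hψ.integral_eq_sub σ hσ τ hτ,
          hχ.integral_eq_sub σ hσ τ hτ]
    _ = _ := by abel

theorem norm_sub_le (hν : IsIntegrablyLipschitz ν K I)
    (hψ : IsCaratheodorySolution (fun r y => ν r y + g r) I ψ)
    (hχ : IsCaratheodorySolution ν I χ) (hg : IntegrableOn g I) (hσ : σ ∈ I) (hτ : τ ∈ I) :
    ‖ψ τ - χ τ‖ ≤
      (‖ψ σ - χ σ‖ + |∫ q in σ..τ, ‖g q‖|) * Real.exp (∫ q in I, (K q : ℝ)) := by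
  have hsub : uIcc σ τ ⊆ I := OrdConnected.uIcc_subset ‹_› hσ hτ
  have hcont : ContinuousOn (fun r => ‖ψ r - χ r‖) (uIcc σ τ) :=
    (hψ.continuousOn.sub hχ.continuousOn).norm.mono hsub
  have hg_norm := (intervalIntegrable_of_integrableOn_ordConnected hg hσ hτ).norm
  have hK := intervalIntegrable_of_integrableOn_ordConnected hν.integrableOn hσ hτ
  have hintegral (r : ℝ) (hr : r ∈ uIcc σ τ) : ‖ψ r - χ r‖ ≤
      (‖ψ σ - χ σ‖ + |∫ q in σ..τ, ‖g q‖|) + |∫ q in σ..r, K q * ‖ψ q - χ q‖| := by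
    have hσr : uIcc σ r ⊆ uIcc σ τ := uIcc_subset_uIcc_left hr
    have hν_le := hν.norm_integral_sub_le hσ (hsub hr) (hcont.mono hσr) fun q _ => le_rfl
    have hg_le : ‖∫ q in σ..r, g q‖ ≤ |∫ q in σ..τ, ‖g q‖| :=
      intervalIntegral.norm_integral_le_abs_integral_norm.trans
        (abs_integral_le_abs_integral_of_mem_uIcc hg_norm (fun q => norm_nonneg _) hr)
    have hsplit : ψ r - χ r =
        (ψ σ - χ σ) + (∫ q in σ..r, g q) + ∫ q in σ..r, (ν q (ψ q) - ν q (χ q)) := by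
      rw [hψ.integral_sub_eq hχ hg hσ (hsub hr)]
      abel
    calc ‖ψ r - χ r‖ ≤ ‖ψ σ - χ σ‖ + ‖∫ q in σ..r, g q‖ +
          ‖∫ q in σ..r, (ν q (ψ q) - ν q (χ q))‖ := hsplit ▸ norm_add₃_le
      _ ≤ _ := by gcongr
  calc ‖ψ τ - χ τ‖ ≤ (‖ψ σ - χ σ‖ + |∫ q in σ..τ, ‖g q‖|) * Real.exp |∫ q in σ..τ, (K q : ℝ)| :=
        le_mul_exp_abs_integral_of_le_add_abs_integral hK (fun r _ => (K r).2) hcont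
          (fun r _ => norm_nonneg _) hintegral
    _ ≤ _ := by
        gcongr
        exact abs_integral_le_setIntegral_of_ordConnected hν.integrableOn (fun r => (K r).2) hσ hτ

theorem norm_sub_sub_integral_le (hν : IsIntegrablyLipschitz ν K I)
    (hψ : IsCaratheodorySolution (fun r y => ν r y + g r) I ψ)
    (hχ : IsCaratheodorySolution ν I χ) (hg : IntegrableOn g I) (hσ : σ ∈ I) (hτ : τ ∈ I)
    (heq : ψ σ = χ σ) :
    ‖ψ τ - χ τ - ∫ q in σ..τ, g q‖ ≤ Real.exp (∫ q in I, (K q : ℝ)) *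
      (|∫ q in σ..τ, ‖g q‖| * |∫ q in σ..τ, (K q : ℝ)|) := by
  have hg_norm := (intervalIntegrable_of_integrableOn_ordConnected hg hσ hτ).norm
  have hclose (q : ℝ) (hq : q ∈ uIcc σ τ) : ‖ψ q - χ q‖ ≤
      |∫ q in σ..τ, ‖g q‖| * Real.exp (∫ q in I, (K q : ℝ)) := by
    have hle := hψ.norm_sub_le hν hχ hg hσ (OrdConnected.uIcc_subset ‹_› hσ hτ hq)
    rw [heq, sub_self, norm_zero, zero_add] at hle
    refine hle.trans ?_
    gcongr ?_ * _
    exact abs_integral_le_abs_integral_of_mem_uIcc hg_norm (fun q => norm_nonneg _) hq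
  have hν_le := hν.norm_integral_sub_le hσ hτ continuousOn_const hclose
  rw [hψ.integral_sub_eq hχ hg hσ hτ, heq, sub_self, sub_zero,
    intervalIntegral.integral_mul_const, abs_mul, abs_mul, abs_abs, Real.abs_exp] at hν_le
  linarith

end IsCaratheodorySolution

namespace IsCaratheodoryFlow

theorem of_eq_add_integral {b : ℝ → ℝ}
    (hν : ∀ y, AEStronglyMeasurable (fun t => ν t y) (volume.restrict I))
    (hν_cont : ∀ t ∈ I, Continuous (ν t)) (hν_le : ∀ t ∈ I, ∀ y, ‖ν t y‖ ≤ b t)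
    (hb : IntegrableOn b I) (hΦ_cont : ∀ s ∈ I, ∀ x, ContinuousOn (fun t => Φ s t x) I)
    (hΦ : ∀ s ∈ I, ∀ x, ∀ t ∈ I, Φ s t x = x + ∫ r in s..t, ν r (Φ s r x)) :
    IsCaratheodoryFlow ν I Φ where
  self s hs x := by rw [hΦ s hs x s hs, intervalIntegral.integral_same, add_zero]
  isSolution s hs x := .of_eq_add_integral (hΦ_cont s hs x)
    (integrableOn_apply_of_continuousOn (OrdConnected.measurableSet ‹_›) hν hν_cont hν_le hb
      (hΦ_cont s hs x)) hs (hΦ s hs x)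

theorem norm_sub_solution_le (hν : IsIntegrablyLipschitz ν K I) (hΦ : IsCaratheodoryFlow ν I Φ)
    (hψ : IsCaratheodorySolution (fun r y => ν r y + g r) I ψ) (hg : IntegrableOn g I)
    (hσ : σ ∈ I) (hτ : τ ∈ I) :
    ‖Φ σ τ (ψ σ) - ψ τ‖ ≤ |∫ q in σ..τ, ‖g q‖| * Real.exp (∫ q in I, (K q : ℝ)) := by
  simpa only [hΦ.self σ hσ, sub_self, norm_zero, zero_add, norm_sub_rev] using
    hψ.norm_sub_le hν (hΦ.isSolution σ hσ (ψ σ)) hg hσ hτ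

theorem apply_solution (hν : IsIntegrablyLipschitz ν K I) (hΦ : IsCaratheodoryFlow ν I Φ)
    (hψ : IsCaratheodorySolution ν I ψ) (hσ : σ ∈ I) (hτ : τ ∈ I) : Φ σ τ (ψ σ) = ψ τ := by
  simpa [sub_eq_zero] using hΦ.norm_sub_solution_le hν (g := 0) (by simpa using hψ)
    integrableOn_zero hσ hτ

theorem apply_apply (hν : IsIntegrablyLipschitz ν K I) (hΦ : IsCaratheodoryFlow ν I Φ)
    (hs : s ∈ I) (hσ : σ ∈ I) (hτ : τ ∈ I) (x : E) : Φ σ τ (Φ s σ x) = Φ s τ x :=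
  hΦ.apply_solution hν (hΦ.isSolution s hs x) hσ hτ

theorem norm_sub_le (hν : IsIntegrablyLipschitz ν K I) (hΦ : IsCaratheodoryFlow ν I Φ)
    (hσ : σ ∈ I) (hτ : τ ∈ I) (x y : E) :
    ‖Φ σ τ x - Φ σ τ y‖ ≤ Real.exp (∫ q in I, (K q : ℝ)) * ‖x - y‖ := by
  have hx : IsCaratheodorySolution (fun r z => ν r z + (0 : ℝ → E) r) I fun r => Φ σ r x := by
    simpa only [Pi.zero_apply, add_zero] using hΦ.isSolution σ hσ x
  simpa [hΦ.self σ hσ, mul_comm] using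
    hx.norm_sub_le hν (hΦ.isSolution σ hσ y) integrableOn_zero hσ hτ

theorem norm_fderiv_le (hν : IsIntegrablyLipschitz ν K I) (hΦ : IsCaratheodoryFlow ν I Φ)
    (hσ : σ ∈ I) (hτ : τ ∈ I) (x : E) :
    ‖fderiv ℝ (Φ σ τ) x‖ ≤ Real.exp (∫ q in I, (K q : ℝ)) :=
  norm_fderiv_le_of_lip' ℝ (Real.exp_nonneg _)
    (.of_forall fun y => hΦ.norm_sub_le hν hσ hτ y x)

theorem hasDerivAt_apply_solution (hν : IsIntegrablyLipschitz ν K I)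
    (hΦ : IsCaratheodoryFlow ν I Φ) (hψ : IsCaratheodorySolution (fun r y => ν r y + g r) I ψ)
    (hg : IntegrableOn g I) (hτ : I ∈ 𝓝 τ) {N' K' : ℝ}
    (hg_deriv : HasDerivAt (fun σ => ∫ q in τ..σ, g q) (g τ) τ)
    (hg_norm_deriv : HasDerivAt (fun σ => ∫ q in τ..σ, ‖g q‖) N' τ)
    (hK_deriv : HasDerivAt (fun σ => ∫ q in τ..σ, (K q : ℝ)) K' τ) :
    HasDerivAt (fun σ => Φ σ τ (ψ σ)) (g τ) τ := by
  have hτI : τ ∈ I := mem_of_mem_nhds hτ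
  refine hasDerivAt_of_isBigO_mul_sub hg_deriv hg_norm_deriv hK_deriv.continuousAt
    (.of_bound (Real.exp (∫ q in I, (K q : ℝ))) ?_)
  filter_upwards [hτ] with σ hσ
  have hle := hψ.norm_sub_sub_integral_le hν (hΦ.isSolution σ hσ (ψ σ)) hg hσ hτI
    (hΦ.self σ hσ _).symm
  rw [← norm_neg] at hle
  simp only [hΦ.self τ hτI, intervalIntegral.integral_same, sub_zero, norm_mul, Real.norm_eq_abs]
  rw [intervalIntegral.integral_symm σ τ, intervalIntegral.integral_symm σ τ,
    intervalIntegral.integral_symm σ τ, abs_neg, abs_neg]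
  convert! hle using 2
  abel

theorem absolutelyContinuousOnInterval_apply_solution (hν : IsIntegrablyLipschitz ν K I)
    (hΦ : IsCaratheodoryFlow ν I Φ) (hψ : IsCaratheodorySolution (fun r y => ν r y + g r) I ψ)
    (hg : IntegrableOn g I) (hs : s ∈ I) (ht : t ∈ I) :
    AbsolutelyContinuousOnInterval (fun σ => Φ σ t (ψ σ)) s t := by
  set C := Real.exp (∫ q in I, (K q : ℝ))
  have hgI := intervalIntegrable_of_integrableOn_ordConnected hg hs ht
  have hsub : uIcc s t ⊆ I := OrdConnected.uIcc_subset ‹_› hs ht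
  refine absolutelyContinuousOnInterval_of_dist_le_integral (C := C * C) hgI.norm
    fun σ hσ τ hτ => ?_
  rw [dist_eq_norm, ← hΦ.apply_apply hν (hsub hσ) (hsub hτ) ht]
  calc ‖Φ τ t (Φ σ τ (ψ σ)) - Φ τ t (ψ τ)‖ ≤ C * ‖Φ σ τ (ψ σ) - ψ τ‖ :=
        hΦ.norm_sub_le hν (hsub hτ) ht _ _
    _ ≤ C * (|∫ q in σ..τ, ‖g q‖| * C) := by
        gcongr
        exact hΦ.norm_sub_solution_le hν hψ hg (hsub hσ) (hsub hτ)
    _ = C * C * |∫ q in τ..σ, ‖g q‖| := by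
        rw [intervalIntegral.integral_symm τ σ, abs_neg]
        ring

variable [CompleteSpace E]

theorem ae_hasDerivAt_apply_solution (hν : IsIntegrablyLipschitz ν K I)
    (hΦ : IsCaratheodoryFlow ν I Φ) (hψ : IsCaratheodorySolution (fun r y => ν r y + g r) I ψ)
    (hg : IntegrableOn g I) (hs : s ∈ I) (ht : t ∈ I)
    (hΦ_diff : ∀ τ ∈ I, Differentiable ℝ (Φ τ t)) :
    ∀ᵐ τ, τ ∈ uIcc s t →
      HasDerivAt (fun σ => Φ σ t (ψ σ)) (fderiv ℝ (Φ τ t) (ψ τ) (g τ)) τ := by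
  have hgI := intervalIntegrable_of_integrableOn_ordConnected hg hs ht
  have hK := intervalIntegrable_of_integrableOn_ordConnected hν.integrableOn hs ht
  filter_upwards [hgI.ae_hasDerivAt_integral, hgI.norm.ae_hasDerivAt_integral,
    hK.ae_hasDerivAt_integral, ae_mem_nhds_of_mem_ordConnected I]
    with τ hg_deriv hg_norm_deriv hK_deriv hnhds hτ
  have hτI : τ ∈ I := OrdConnected.uIcc_subset ‹_› hs ht hτ
  have hinner := hΦ.hasDerivAt_apply_solution hν hψ hg (hnhds hτI) (hg_deriv hτ τ hτ)
    (hg_norm_deriv hτ τ hτ) (hK_deriv hτ τ hτ)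
  have houter : HasFDerivAt (Φ τ t) (fderiv ℝ (Φ τ t) (ψ τ)) (Φ τ τ (ψ τ)) := by
    rw [hΦ.self τ hτI]
    exact (hΦ_diff τ hτI _).hasFDerivAt
  refine (houter.comp_hasDerivAt τ hinner).congr_of_eventuallyEq ?_
  filter_upwards [hnhds hτI] with σ hσ
  exact (hΦ.apply_apply hν hσ hτI ht (ψ σ)).symm

theorem intervalIntegrable_fderiv_apply (hν : IsIntegrablyLipschitz ν K I)
    (hΦ : IsCaratheodoryFlow ν I Φ) (hψ : IsCaratheodorySolution (fun r y => ν r y + g r) I ψ)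
    (hg : IntegrableOn g I) (hs : s ∈ I) (ht : t ∈ I)
    (hΦ_diff : ∀ τ ∈ I, Differentiable ℝ (Φ τ t)) :
    IntervalIntegrable (fun τ => fderiv ℝ (Φ τ t) (ψ τ) (g τ)) volume s t := by
  have hgI := intervalIntegrable_of_integrableOn_ordConnected hg hs ht
  have hderiv := hΦ.ae_hasDerivAt_apply_solution hν hψ hg hs ht hΦ_diff
  refine (hgI.norm.const_mul (Real.exp (∫ q in I, (K q : ℝ)))).mono_fun' ?_
    (ae_restrict_of_forall_mem measurableSet_uIoc fun τ hτ => ?_)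
  · refine (aestronglyMeasurable_deriv (fun σ => Φ σ t (ψ σ)) _).congr ?_
    filter_upwards [ae_restrict_mem measurableSet_uIoc, ae_restrict_of_ae hderiv] with τ hτ hderivτ
    exact (hderivτ (uIoc_subset_uIcc hτ)).deriv
  · exact ContinuousLinearMap.le_of_opNorm_le _ (hΦ.norm_fderiv_le hν
      (OrdConnected.uIcc_subset ‹_› hs ht (uIoc_subset_uIcc hτ)) ht _) _

theorem alekseev_groebner (hν : IsIntegrablyLipschitz ν K I)
    (hΦ : IsCaratheodoryFlow ν I Φ) (hψ : IsCaratheodorySolution (fun r y => ν r y + g r) I ψ)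
    (hg : IntegrableOn g I) (hs : s ∈ I) (ht : t ∈ I)
    (hΦ_diff : ∀ τ ∈ I, Differentiable ℝ (Φ τ t)) :
    ∫ τ in s..t, fderiv ℝ (Φ τ t) (ψ τ) (g τ) = ψ t - Φ s t (ψ s) := by
  rw [integral_eq_sub_of_ae_hasDerivAt
    (hΦ.absolutelyContinuousOnInterval_apply_solution hν hψ hg hs ht)
    (hΦ.intervalIntegrable_fderiv_apply hν hψ hg hs ht hΦ_diff)
    (hΦ.ae_hasDerivAt_apply_solution hν hψ hg hs ht hΦ_diff), hΦ.self t ht]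

end IsCaratheodoryFlow

variable {η : ℝ → E → E} {b : ℝ → ℝ} {ψ : ℝ → ℝ → E} {x : E}

theorem tendsto_solution_add_smul (hν : IsIntegrablyLipschitz ν K I)
    (hχ : IsCaratheodorySolution ν I χ)
    (hψ : ∀ ε : ℝ, IsCaratheodorySolution (fun r y => ν r y + ε • η r y) I (ψ ε))
    (hηψ : ∀ ε, IntegrableOn (fun r => η r (ψ ε r)) I)
    (hη_le : ∀ r ∈ I, ∀ y, ‖η r y‖ ≤ b r) (hb : IntegrableOn b I)
    (hs : s ∈ I) (hτ : τ ∈ I) (hψs : ∀ ε, ψ ε s = χ s) :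
    Tendsto (fun ε => ψ ε τ) (𝓝 0) (𝓝 (χ τ)) := by
  set C := Real.exp (∫ q in I, (K q : ℝ))
  have hbI := intervalIntegrable_of_integrableOn_ordConnected hb hs hτ
  have hle (ε : ℝ) : ‖ψ ε τ - χ τ‖ ≤ |ε| * |∫ q in s..τ, b q| * C := by
    have hstab := (hψ ε).freeze_perturbation.norm_sub_le hν hχ ((hηψ ε).smul ε) hs hτ
    rw [hψs, sub_self, norm_zero, zero_add] at hstab
    refine hstab.trans ?_
    gcongr
    have hη_int : ‖∫ q in s..τ, ‖ε • η q (ψ ε q)‖‖ ≤ |∫ q in s..τ, |ε| * b q| :=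
      intervalIntegral.norm_integral_le_abs_of_norm_le
        (ae_restrict_of_forall_mem measurableSet_uIoc fun q hq => by
          rw [norm_norm, norm_smul, Real.norm_eq_abs]
          gcongr
          exact hη_le q (OrdConnected.uIoc_subset ‹_› hs hτ hq) _)
        (hbI.const_mul |ε|)
    rwa [intervalIntegral.integral_const_mul, abs_mul, abs_abs] at hη_int
  rw [tendsto_iff_norm_sub_tendsto_zero]
  refine squeeze_zero (fun _ => norm_nonneg _) hle ?_
  have hcont : Continuous fun ε : ℝ => |ε| * |∫ q in s..τ, b q| * C := by fun_prop
  simpa using hcont.tendsto 0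

variable [CompleteSpace E]

namespace IsCaratheodoryFlow

theorem solution_add_smul_eq {ε : ℝ} {χ : ℝ → E} (hν : IsIntegrablyLipschitz ν K I)
    (hΦ : IsCaratheodoryFlow ν I Φ)
    (hχ : IsCaratheodorySolution (fun r y => ν r y + ε • η r y) I χ)
    (hηχ : IntegrableOn (fun r => η r (χ r)) I) (hs : s ∈ I) (ht : t ∈ I)
    (hΦ_diff : ∀ τ ∈ I, Differentiable ℝ (Φ τ t)) :
    χ t = Φ s t (χ s) + ε • ∫ τ in s..t, fderiv ℝ (Φ τ t) (χ τ) (η τ (χ τ)) := by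
  have hformula := hΦ.alekseev_groebner hν hχ.freeze_perturbation (hηχ.smul ε) hs ht hΦ_diff
  simp only [map_smul, intervalIntegral.integral_smul] at hformula
  rw [hformula, add_sub_cancel]

theorem tendsto_integral_fderiv_apply (hν : IsIntegrablyLipschitz ν K I)
    (hΦ : IsCaratheodoryFlow ν I Φ)
    (hψ : ∀ ε : ℝ, IsCaratheodorySolution (fun r y => ν r y + ε • η r y) I (ψ ε))
    (hηψ : ∀ ε, IntegrableOn (fun r => η r (ψ ε r)) I)
    (hη_cont : ∀ r ∈ I, Continuous (η r)) (hη_le : ∀ r ∈ I, ∀ y, ‖η r y‖ ≤ b r)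
    (hb : IntegrableOn b I) (hs : s ∈ I) (ht : t ∈ I) (hψs : ∀ ε, ψ ε s = x)
    (hΦ_C1 : ∀ τ ∈ I, ContDiff ℝ 1 (Φ τ t)) :
    Tendsto (fun ε => ∫ τ in s..t, fderiv ℝ (Φ τ t) (ψ ε τ) (η τ (ψ ε τ))) (𝓝[≠] 0)
      (𝓝 (∫ τ in s..t, fderiv ℝ (Φ τ t) (Φ s τ x) (η τ (Φ s τ x)))) := by
  have hsub : uIoc s t ⊆ I := OrdConnected.uIoc_subset ‹_› hs ht
  have hbI := intervalIntegrable_of_integrableOn_ordConnected hb hs ht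
  refine intervalIntegral.tendsto_integral_filter_of_dominated_convergence
    (fun τ => Real.exp (∫ q in I, (K q : ℝ)) * b τ) ?_ ?_ (hbI.const_mul _) ?_
  · filter_upwards [self_mem_nhdsWithin] with ε hε
    have hint := hΦ.intervalIntegrable_fderiv_apply hν (hψ ε).freeze_perturbation
      ((hηψ ε).smul ε) hs ht fun τ hτ => (hΦ_C1 τ hτ).differentiable one_ne_zero
    simpa only [map_smul, Pi.smul_def, inv_smul_smul₀ hε] using
      (hint.smul ε⁻¹).def'.aestronglyMeasurable
  · refine .of_forall fun ε => .of_forall fun τ hτ => ?_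
    exact ContinuousLinearMap.le_of_opNorm_le_of_le _ (hΦ.norm_fderiv_le hν (hsub hτ) ht _)
      (hη_le τ (hsub hτ) _)
  · refine .of_forall fun τ hτ => ?_
    have hsol := tendsto_solution_add_smul hν (hΦ.isSolution s hs x) hψ hηψ hη_le hb hs (hsub hτ)
      fun ε => by rw [hψs, hΦ.self s hs]
    have hcont := ((hΦ_C1 τ (hsub hτ)).continuous_fderiv one_ne_zero).clm_apply
      (hη_cont τ (hsub hτ))
    exact ((hcont.tendsto _).comp hsol).mono_left nhdsWithin_le_nhds

end IsCaratheodoryFlow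

theorem flow_derivative_wrt_velocity_general {φ : ℝ → ℝ → ℝ → E → E}
    (hν : IsIntegrablyLipschitz ν K I)
    (hη : ∀ y, AEStronglyMeasurable (fun r => η r y) (volume.restrict I))
    (hη_cont : ∀ r ∈ I, Continuous (η r)) (hη_le : ∀ r ∈ I, ∀ y, ‖η r y‖ ≤ b r)
    (hb : IntegrableOn b I)
    (hφ : ∀ ε : ℝ, IsCaratheodoryFlow (fun r y => ν r y + ε • η r y) I (φ ε))
    (hs : s ∈ I) (ht : t ∈ I) (hφ_C1 : ∀ τ ∈ I, ContDiff ℝ 1 (φ 0 τ t)) (x : E) :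
    HasDerivAt (fun ε => φ ε s t x)
      (∫ τ in s..t, fderiv ℝ (φ 0 τ t) (φ 0 s τ x) (η τ (φ 0 s τ x))) 0 := by
  have hφ₀ : IsCaratheodoryFlow ν I (φ 0) := by simpa only [zero_smul, add_zero] using hφ 0
  have hψ (ε : ℝ) := (hφ ε).isSolution s hs x
  have hψs (ε : ℝ) : φ ε s s x = x := (hφ ε).self s hs x
  have hηψ (ε : ℝ) : IntegrableOn (fun r => η r (φ ε s r x)) I :=
    integrableOn_apply_of_continuousOn (OrdConnected.measurableSet ‹_›) hη hη_cont hη_le hb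
      (hψ ε).continuousOn
  rw [hasDerivAt_iff_tendsto_slope]
  refine (hφ₀.tendsto_integral_fderiv_apply hν hψ hηψ hη_cont hη_le hb hs ht hψs hφ_C1).congr' ?_
  filter_upwards [self_mem_nhdsWithin] with ε hε
  have hformula := hφ₀.solution_add_smul_eq hν (hψ ε) (hηψ ε) hs ht
    fun τ hτ => (hφ_C1 τ hτ).differentiable one_ne_zero
  rw [hψs] at hformula
  rw [slope_def_module, hformula, add_sub_cancel_left, sub_zero, inv_smul_smul₀ hε]

end CaratheodoryFlows

/-- **Derivative of the flow with respect to the velocity field.**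
`ν, η` are time-dependent `C¹` vector fields with `‖ν t x‖, ‖η t x‖ ≤ b t` and
`‖Dν(t,·)‖, ‖Dη(t,·)‖ ≤ ℓ t` for integrable `ℓ, b`, measurably depending on `t`.  For each
`ε`, `φ ε s t x` is the value at time `t` of the unique solution of
`ψ t = x + ∫_s^t (ν + εη)(r, ψ r) dr`, and `φ 0` is spatially `C¹`.  Then for all
`s, t ∈ [0,1]` and `x`, `ε ↦ φ ε s t x` is differentiable at `ε = 0` with derivative
`∫_s^t Dφ(τ,t)(φ(s,τ,x)) ( η(τ, φ(s,τ,x)) ) dτ`. -/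
theorem flow_derivative_wrt_velocity
    (n : ℕ)
    (ν η : ℝ → EuclideanSpace ℝ (Fin n) → EuclideanSpace ℝ (Fin n))
    (ℓ b : ℝ → ℝ)
    (hℓint : IntegrableOn ℓ (Icc (0:ℝ) 1))
    (hbint : IntegrableOn b (Icc (0:ℝ) 1))
    (hνmeas : ∀ x, AEStronglyMeasurable (fun t => ν t x) (volume.restrict (Icc (0:ℝ) 1)))
    (hηmeas : ∀ x, AEStronglyMeasurable (fun t => η t x) (volume.restrict (Icc (0:ℝ) 1)))
    (hνC1 : ∀ t ∈ Icc (0:ℝ) 1, ContDiff ℝ 1 (ν t))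
    (hηC1 : ∀ t ∈ Icc (0:ℝ) 1, ContDiff ℝ 1 (η t))
    (hνbd : ∀ t ∈ Icc (0:ℝ) 1, ∀ x, ‖ν t x‖ ≤ b t)
    (hηbd : ∀ t ∈ Icc (0:ℝ) 1, ∀ x, ‖η t x‖ ≤ b t)
    (hνder : ∀ t ∈ Icc (0:ℝ) 1, ∀ x, ‖fderiv ℝ (ν t) x‖ ≤ ℓ t)
    (hηder : ∀ t ∈ Icc (0:ℝ) 1, ∀ x, ‖fderiv ℝ (η t) x‖ ≤ ℓ t)
    (φ : ℝ → ℝ → ℝ → EuclideanSpace ℝ (Fin n) → EuclideanSpace ℝ (Fin n))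
    (hφcont : ∀ ε : ℝ, ∀ s ∈ Icc (0:ℝ) 1, ∀ x,
      ContinuousOn (fun t => φ ε s t x) (Icc (0:ℝ) 1))
    (hφ : ∀ ε : ℝ, ∀ s ∈ Icc (0:ℝ) 1, ∀ x, ∀ t ∈ Icc (0:ℝ) 1,
      φ ε s t x = x + ∫ r in s..t, (ν r (φ ε s r x) + ε • η r (φ ε s r x)))
    (hφC1 : ∀ s ∈ Icc (0:ℝ) 1, ∀ t ∈ Icc (0:ℝ) 1, ContDiff ℝ 1 (φ 0 s t)) :
    ∀ s ∈ Icc (0:ℝ) 1, ∀ t ∈ Icc (0:ℝ) 1, ∀ x,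
      HasDerivAt (fun ε => φ ε s t x)
        (∫ τ in s..t, (fderiv ℝ (φ 0 τ t) (φ 0 s τ x)) (η τ (φ 0 s τ x))) 0 := by
  have hflow (ε : ℝ) :
      IsCaratheodoryFlow (fun r y => ν r y + ε • η r y) (Icc 0 1) (φ ε) :=
    .of_eq_add_integral (fun y => (hνmeas y).add ((hηmeas y).const_smul ε))
      (fun t ht => (hνC1 t ht).continuous.add ((hηC1 t ht).continuous.const_smul ε))
      (fun t ht y => norm_add_le_of_le (hνbd t ht y) <|
        (norm_smul_le _ _).trans (mul_le_mul_of_nonneg_left (hηbd t ht y) (norm_nonneg ε)))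
      (hbint.add (hbint.const_mul ‖ε‖)) (hφcont ε) (hφ ε)
  have hlip := IsIntegrablyLipschitz.of_norm_fderiv_le hℓint
    (fun t ht => (hνC1 t ht).differentiable one_ne_zero) hνder
  exact fun s hs t ht x => flow_derivative_wrt_velocity_general hlip hηmeas
    (fun r hr => (hηC1 r hr).continuous) hηbd hbint hflow hs ht (fun τ hτ => hφC1 τ hτ t ht) x
end

section
/- Under the same hypotheses as the derivative-of-the-flow result (ν, η time-dependent C¹ vector fields with integrable bounds, φ^ε the two-parameter flow of ν + εη, φ = φ⁰ spatially C¹), assume in addition that the linear maps Dφ(s,τ,y) are invertible for all s, τ ∈ [0,1] and y ∈ ℝⁿ. Then for all s, t ∈ [0,1] and x ∈ ℝⁿ, the map ε ↦ φ^ε(t,s,x) — where φ^ε(t,s,·) is the inverse of φ^ε(s,t,·) — is differentiable at ε = 0 with derivative −∫_s^t [ Dφ(s,τ, φ(t,s,x)) ]⁻¹ ( η(τ, φ(t,τ,x)) ) dτ. -/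
open MeasureTheory Set Filter

/-!
Let `p` be the trajectory of `ν + εη` with `p t = x`, so that `p s = φ ε t s x`. Transporting
`p σ` back to time `s` by the unperturbed flow gives a curve `σ ↦ φ 0 σ s (p σ)` which is
constant for `ε = 0`; by the flow law its velocity is `ε • Dφ(σ, s, p σ) η(σ, p σ)` almost
everywhere. Integrating from `s` to `t` yields the Alekseev–Gröbner formula
`φ 0 t s x - φ ε t s x = ε • ∫_s^t Dφ(τ, s, p τ) η(τ, p τ) dτ`.
Divide by `ε` and let `ε → 0`: Grönwall's inequality bounds `Dφ` and gives `p τ → φ 0 t τ x`, so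
dominated convergence applies. Finally `Dφ(τ, s, φ 0 t τ x) = Dφ(s, τ, φ 0 t s x)⁻¹`, because
`φ 0 τ s` and `φ 0 s τ` are mutually inverse.
-/

open scoped Topology NNReal Interval

section IntervalIntegral

variable {E : Type*} [NormedAddCommGroup E] {a b : ℝ}

theorem uIoc_subset_Icc {s t : ℝ} (hs : s ∈ Icc a b) (ht : t ∈ Icc a b) : Ι s t ⊆ Icc a b :=
  ordConnected_Icc.uIoc_subset hs ht

theorem intervalIntegrable_of_integrableOn_Icc {f : ℝ → E} {s t : ℝ}
    (hf : IntegrableOn f (Icc a b)) (hs : s ∈ Icc a b) (ht : t ∈ Icc a b) :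
    IntervalIntegrable f volume s t :=
  (hf.mono_set (uIcc_subset_Icc hs ht)).intervalIntegrable

variable [NormedSpace ℝ E]

theorem norm_intervalIntegral_le_setIntegral_uIoc {f : ℝ → E} {g : ℝ → ℝ} {s t : ℝ}
    (hg : IntegrableOn g (Ι s t)) (hfg : ∀ r ∈ Ι s t, ‖f r‖ ≤ g r) :
    ‖∫ r in s..t, f r‖ ≤ ∫ r in Ι s t, g r := by
  rw [intervalIntegral.norm_integral_eq_norm_integral_uIoc]
  exact norm_integral_le_of_norm_le hg (ae_restrict_of_forall_mem measurableSet_uIoc hfg)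

theorem setIntegral_mono_set_of_nonneg {α : Type*} [MeasurableSpace α] {μ : Measure α}
    {f : α → ℝ} {S T : Set α} (hf : IntegrableOn f T μ) (hf0 : ∀ x, 0 ≤ f x) (hST : S ⊆ T) :
    ∫ x in S, f x ∂μ ≤ ∫ x in T, f x ∂μ :=
  setIntegral_mono_set hf (Eventually.of_forall hf0) hST.eventuallyLE

theorem abs_intervalIntegral_eq_setIntegral_uIoc {f : ℝ → ℝ} (hf : ∀ r, 0 ≤ f r) (s t : ℝ) :
    |∫ r in s..t, f r| = ∫ r in Ι s t, f r := by
  rw [intervalIntegral.abs_integral_eq_abs_integral_uIoc, abs_of_nonneg (integral_nonneg hf)]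

theorem ae_hasDerivAt_intervalIntegral_of_integrableOn_Icc [CompleteSpace E] {f : ℝ → E}
    (hf : IntegrableOn f (Icc a b)) :
    ∀ᵐ τ, τ ∈ Icc a b → HasDerivAt (fun σ => ∫ r in τ..σ, f r) (f τ) τ := by
  rcases le_or_gt a b with hab | hab
  · rw [← uIcc_of_le hab] at hf ⊢
    filter_upwards [hf.intervalIntegrable.ae_hasDerivAt_integral] with τ hτ hmem
    exact hτ hmem τ hmem
  · simp [Icc_eq_empty_of_lt hab]

end IntervalIntegral

theorem hasDerivAt_zero_of_norm_le {E F : Type*} [NormedAddCommGroup E] [NormedSpace ℝ E]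
    [NormedAddCommGroup F] [NormedSpace ℝ F] {f : ℝ → E} {h : ℝ → F} {τ C : ℝ}
    (hh : HasDerivAt h 0 τ) (hτ : h τ = 0) (hfh : ∀ᶠ σ in 𝓝 τ, ‖f σ‖ ≤ C * ‖h σ‖) :
    HasDerivAt f 0 τ := by
  have hfτ : f τ = 0 := by simpa [hτ] using hfh.self_of_nhds
  rw [hasDerivAt_iff_isLittleO] at hh ⊢
  simp only [hτ, hfτ, smul_zero, sub_zero] at hh ⊢
  exact (Asymptotics.IsBigO.of_bound C hfh).trans_isLittleO hh

theorem fderiv_inverse_eq_fderiv_of_inverse {𝕜 E F : Type*} [NontriviallyNormedField 𝕜]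
    [NormedAddCommGroup E] [NormedSpace 𝕜 E] [NormedAddCommGroup F] [NormedSpace 𝕜 F]
    {f : E → F} {g : F → E} {x : E} (hgf : Function.LeftInverse g f)
    (hfg : Function.RightInverse g f) (hf : DifferentiableAt 𝕜 f x)
    (hg : DifferentiableAt 𝕜 g (f x)) :
    (fderiv 𝕜 f x).inverse = fderiv 𝕜 g (f x) := by
  have hf' : HasFDerivAt f (fderiv 𝕜 f x) (g (f x)) := by rw [hgf x]; exact hf.hasFDerivAt
  refine ContinuousLinearMap.inverse_eq ?_ ?_
  · refine (hf'.comp (f x) hg.hasFDerivAt).unique ?_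
    rw [hfg.comp_eq_id]; exact hasFDerivAt_id _
  · refine (hg.hasFDerivAt.comp x hf.hasFDerivAt).unique ?_
    rw [hgf.comp_eq_id]; exact hasFDerivAt_id _

section AbsolutelyContinuous

variable {E : Type*} [NormedAddCommGroup E] {a b : ℝ}

theorem absolutelyContinuousOnInterval_of_dist_le {X Y : Type*} [PseudoMetricSpace X]
    [PseudoMetricSpace Y] {f : ℝ → X} {g : ℝ → Y} {C : ℝ}
    (hg : AbsolutelyContinuousOnInterval g a b)
    (hfg : ∀ x ∈ [[a, b]], ∀ y ∈ [[a, b]], dist (f x) (f y) ≤ C * dist (g x) (g y)) :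
    AbsolutelyContinuousOnInterval f a b := by
  refine squeeze_zero' (Eventually.of_forall fun P => Finset.sum_nonneg fun _ _ => dist_nonneg) ?_
    (by simpa only [mul_zero] using Tendsto.const_mul C hg)
  filter_upwards [mem_inf_of_right (mem_principal_self _)] with P hP
  rw [Finset.mul_sum]
  exact Finset.sum_le_sum fun i hi => hfg _ (hP.1 i hi).1 _ (hP.1 i hi).2

variable [NormedSpace ℝ E]

theorem absolutelyContinuousOnInterval_intervalIntegral {f : ℝ → E} {c : ℝ}
    (hf : IntervalIntegrable f volume a b) (hc : c ∈ [[a, b]]) :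
    AbsolutelyContinuousOnInterval (fun x => ∫ r in c..x, f r) a b := by
  refine absolutelyContinuousOnInterval_of_dist_le (C := 1)
    (hf.norm.absolutelyContinuousOnInterval_intervalIntegral hc) fun x hx y hy => ?_
  have hfc {z : ℝ} (hz : z ∈ [[a, b]]) : IntervalIntegrable f volume c z :=
    hf.mono_set (uIcc_subset_uIcc hc hz)
  rw [one_mul, dist_eq_norm, Real.dist_eq,
    intervalIntegral.integral_interval_sub_left (hfc hx) (hfc hy),
    intervalIntegral.integral_interval_sub_left (hfc hx).norm (hfc hy).norm]
  exact intervalIntegral.norm_integral_le_abs_integral_norm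

theorem integral_eq_sub_of_absolutelyContinuous_of_ae_hasDerivAt [CompleteSpace E] {f f' : ℝ → E}
    (hf : AbsolutelyContinuousOnInterval f a b) (hf' : IntervalIntegrable f' volume a b)
    (hderiv : ∀ᵐ x, x ∈ [[a, b]] → HasDerivAt f (f' x) x) :
    ∫ x in a..b, f' x = f b - f a := by
  obtain ⟨C, hC⟩ := (hf.sub
    (absolutelyContinuousOnInterval_intervalIntegral hf' left_mem_uIcc)).const_of_ae_hasDerivAt_zero
    (by
      filter_upwards [hderiv, hf'.ae_hasDerivAt_integral] with x hfx hintx hx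
      simpa only [sub_self] using (hfx hx).sub (hintx hx a left_mem_uIcc))
  have hCa : f a = C := by simpa using hC a left_mem_uIcc
  have hCb : f b - ∫ x in a..b, f' x = C := hC b right_mem_uIcc
  rw [hCa, ← hCb, sub_sub_cancel]

theorem integrableOn_of_ae_hasDerivAt_of_norm_le [CompleteSpace E] {f f' : ℝ → E} {g : ℝ → ℝ}
    {S : Set ℝ} (hS : MeasurableSet S) (hg : IntegrableOn g S)
    (hderiv : ∀ᵐ x, x ∈ S → HasDerivAt f (f' x) x) (hle : ∀ x ∈ S, ‖f' x‖ ≤ g x) :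
    IntegrableOn f' S := by
  refine hg.mono' ?_ (ae_restrict_of_forall_mem hS hle)
  refine (aestronglyMeasurable_deriv f (volume.restrict S)).congr ?_
  exact ((ae_restrict_iff' hS).2 hderiv).mono fun x hx => hx.deriv

end AbsolutelyContinuous

section Gronwall

theorem abs_exp_sub_exp_le_of_nonpos {x y : ℝ} (hx : x ≤ 0) (hy : y ≤ 0) :
    |Real.exp x - Real.exp y| ≤ |x - y| := by
  simpa using (convex_Iic (0 : ℝ)).norm_image_sub_le_of_norm_deriv_le (f := Real.exp) (C := 1)
    (fun z _ => Real.differentiableAt_exp) (fun z hz => by simpa using hz) hy hx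

variable {u l : ℝ → ℝ} {A a b : ℝ}

theorem absolutelyContinuousOnInterval_exp_neg_integral (hab : a ≤ b)
    (hl : IntervalIntegrable l volume a b) (hl0 : ∀ r ∈ Icc a b, 0 ≤ l r) :
    AbsolutelyContinuousOnInterval (fun r => Real.exp (-∫ x in a..r, l x)) a b := by
  refine absolutelyContinuousOnInterval_of_dist_le (C := 1)
    (hl.absolutelyContinuousOnInterval_intervalIntegral left_mem_uIcc) fun x hx y hy => ?_
  rw [uIcc_of_le hab] at hx hy
  have hnonpos {z : ℝ} (hz : z ∈ Icc a b) : -∫ x in a..z, l x ≤ 0 :=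
    neg_nonpos.2 (intervalIntegral.integral_nonneg hz.1 fun r hr => hl0 r ⟨hr.1, hr.2.trans hz.2⟩)
  rw [one_mul, ← dist_neg_neg (∫ x in a..x, l x)]
  exact abs_exp_sub_exp_le_of_nonpos (hnonpos hx) (hnonpos hy)

theorem le_mul_exp_integral_of_le_add_integral_s12 (hab : a ≤ b) (hu : ContinuousOn u (Icc a b))
    (hl : IntervalIntegrable l volume a b) (hl0 : ∀ r ∈ Icc a b, 0 ≤ l r)
    (h : ∀ r ∈ Icc a b, u r ≤ A + ∫ x in a..r, l x * u x) :
    u b ≤ A * Real.exp (∫ x in a..b, l x) := by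
  have hlu : IntervalIntegrable (fun x => l x * u x) volume a b :=
    hl.mul_continuousOn (by rwa [uIcc_of_le hab])
  set W : ℝ → ℝ := fun r => ∫ x in a..r, l x with hW
  set G : ℝ → ℝ := fun r => A + ∫ x in a..r, l x * u x with hG
  have hG_ac : AbsolutelyContinuousOnInterval G a b :=
    absolutelyContinuousOnInterval_of_dist_le (C := 1)
      (hlu.absolutelyContinuousOnInterval_intervalIntegral left_mem_uIcc) (by simp [hG])
  have hF_ac := hG_ac.fun_mul (absolutelyContinuousOnInterval_exp_neg_integral hab hl hl0)
  have hF_deriv : ∀ᵐ x, x ∈ Icc a b → deriv (fun r => G r * Real.exp (-W r)) x ≤ 0 := by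
    rw [← uIcc_of_le hab]
    filter_upwards [hl.ae_hasDerivAt_integral, hlu.ae_hasDerivAt_integral] with x hWx hGx hx
    have hGx' : HasDerivAt G (l x * u x) x := (hGx hx a left_mem_uIcc).const_add A
    have hWx' : HasDerivAt W (l x) x := hWx hx a left_mem_uIcc
    rw [uIcc_of_le hab] at hx
    calc deriv (fun r => G r * Real.exp (-W r)) x
        = l x * Real.exp (-W x) * (u x - G x) := by
          rw [(hGx'.fun_mul hWx'.fun_neg.exp).deriv]; ring
      _ ≤ 0 := mul_nonpos_of_nonneg_of_nonpos (mul_nonneg (hl0 x hx) (Real.exp_pos _).le)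
          (sub_nonpos.2 (h x hx))
  have hF_le : G b * Real.exp (-W b) ≤ A := by
    have hle : G b * Real.exp (-W b) - G a * Real.exp (-W a) ≤ 0 := by
      rw [← hF_ac.integral_deriv_eq_sub, intervalIntegral.integral_of_le hab]
      exact integral_nonpos_of_ae ((ae_restrict_iff' measurableSet_Ioc).2
        (hF_deriv.mono fun x hx hmem => hx (Ioc_subset_Icc_self hmem)))
    simpa [hG, hW] using hle
  calc u b ≤ G b := h b (right_mem_Icc.2 hab)
    _ = G b * Real.exp (-W b) * Real.exp (W b) := by
        rw [mul_assoc, ← Real.exp_add, neg_add_cancel, Real.exp_zero, mul_one]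
    _ ≤ A * Real.exp (W b) := by gcongr

theorem le_mul_exp_setIntegral_of_le_add_setIntegral {s t : ℝ} (hu : ContinuousOn u [[s, t]])
    (hl : IntervalIntegrable l volume s t) (hl0 : ∀ r ∈ [[s, t]], 0 ≤ l r)
    (h : ∀ r ∈ [[s, t]], u r ≤ A + ∫ x in Ι s r, l x * u x) :
    u t ≤ A * Real.exp (∫ x in Ι s t, l x) := by
  rcases le_total s t with hst | hts
  · rw [uIcc_of_le hst] at hu hl0 h
    rw [uIoc_of_le hst, ← intervalIntegral.integral_of_le hst]
    refine le_mul_exp_integral_of_le_add_integral_s12 hst hu hl hl0 fun r hr => ?_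
    simpa only [uIoc_of_le hr.1, ← intervalIntegral.integral_of_le hr.1] using h r hr
  · rw [uIcc_of_ge hts] at hu hl0 h
    rw [uIoc_of_ge hts, ← intervalIntegral.integral_of_le hts]
    have hneg {r : ℝ} (hr : r ∈ Icc (-s) (-t)) : -r ∈ Icc t s := ⟨le_neg.2 hr.2, neg_le.2 hr.1⟩
    have hrev := le_mul_exp_integral_of_le_add_integral_s12 (u := fun r => u (-r))
      (l := fun r => l (-r)) (A := A) (neg_le_neg hts) (hu.comp continuousOn_neg fun r => hneg)
      (by simpa using (IntervalIntegrable.iff_comp_neg).1 hl) (fun r hr => hl0 _ (hneg hr))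
      fun r hr => by
        have hr' := hneg hr
        rw [intervalIntegral.integral_comp_neg (fun x => l x * u x), neg_neg]
        simpa only [uIoc_of_ge hr'.2, ← intervalIntegral.integral_of_le hr'.2] using h _ hr'
    simpa only [intervalIntegral.integral_comp_neg, neg_neg] using hrev

end Gronwall

section Caratheodory

theorem aestronglyMeasurable_comp_simpleFunc {α X Y : Type*} [MeasurableSpace α]
    [TopologicalSpace Y] [TopologicalSpace.PseudoMetrizableSpace Y] {μ : Measure α}
    {w : α → X → Y} (hw : ∀ x, AEStronglyMeasurable (fun t => w t x) μ) (c : SimpleFunc α X) :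
    AEStronglyMeasurable (fun t => w t (c t)) μ := by
  have hfibers : ⋃ x : c.range, c ⁻¹' {x.1} = univ :=
    eq_univ_of_forall fun t => mem_iUnion.2 ⟨⟨c t, c.mem_range_self t⟩, rfl⟩
  rw [← Measure.restrict_univ (μ := μ), ← hfibers, aestronglyMeasurable_iUnion_iff]
  exact fun x => (hw x).restrict.congr
    (ae_restrict_of_forall_mem (c.measurableSet_fiber x.1) fun t ht => congrArg (w t) ht.symm)

theorem aestronglyMeasurable_comp_of_ae_continuous {α X Y : Type*} [MeasurableSpace α]
    [TopologicalSpace X] [TopologicalSpace Y] [TopologicalSpace.PseudoMetrizableSpace Y]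
    {μ : Measure α} {w : α → X → Y} {c : α → X}
    (hw : ∀ x, AEStronglyMeasurable (fun t => w t x) μ) (hwc : ∀ᵐ t ∂μ, Continuous (w t))
    (hc : AEStronglyMeasurable c μ) : AEStronglyMeasurable (fun t => w t (c t)) μ := by
  obtain ⟨g, hg, hcg⟩ := hc
  have hwg : AEStronglyMeasurable (fun t => w t (g t)) μ :=
    aestronglyMeasurable_of_tendsto_ae atTop
      (fun n => aestronglyMeasurable_comp_simpleFunc hw (hg.approx n))
      (hwc.mono fun t ht => (ht.tendsto _).comp (hg.tendsto_approx t))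
  exact hwg.congr (hcg.mono fun t ht => congrArg (w t) ht.symm)

variable {E : Type*} [NormedAddCommGroup E] {v w : ℝ → E → E} {a b : ℝ}

/-- The Carathéodory conditions for a time-dependent vector field on `[a, b]`: measurability in
time, continuity in space, and a dominating function which is integrable in time and uniform in
space. -/
structure IsCaratheodoryField (v : ℝ → E → E) (a b : ℝ) : Prop where
  aestronglyMeasurable : ∀ x, AEStronglyMeasurable (fun t => v t x) (volume.restrict (Icc a b))
  continuous : ∀ t ∈ Icc a b, Continuous (v t)
  dominated : ∃ β : ℝ → ℝ, IntegrableOn β (Icc a b) ∧ ∀ t ∈ Icc a b, ∀ x, ‖v t x‖ ≤ β t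

/-- A Carathéodory field whose spatial Lipschitz constant `ℓ t` is integrable in time. -/
structure IsLipschitzCaratheodoryField (v : ℝ → E → E) (ℓ : ℝ → ℝ≥0) (a b : ℝ) : Prop
    extends IsCaratheodoryField v a b where
  integrableOn_lipschitzConst : IntegrableOn (fun t => (ℓ t : ℝ)) (Icc a b)
  lipschitzWith : ∀ t ∈ Icc a b, LipschitzWith (ℓ t) (v t)

namespace IsCaratheodoryField

theorem integrableOn_comp (hv : IsCaratheodoryField v a b) {p : ℝ → E}
    (hp : ContinuousOn p (Icc a b)) : IntegrableOn (fun r => v r (p r)) (Icc a b) := by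
  obtain ⟨β, hβ, hvβ⟩ := hv.dominated
  refine hβ.mono' ?_ (ae_restrict_of_forall_mem measurableSet_Icc fun t ht => hvβ t ht _)
  exact aestronglyMeasurable_comp_of_ae_continuous hv.aestronglyMeasurable
    (ae_restrict_of_forall_mem measurableSet_Icc hv.continuous)
    (hp.aestronglyMeasurable measurableSet_Icc)

theorem add (hv : IsCaratheodoryField v a b) (hw : IsCaratheodoryField w a b) :
    IsCaratheodoryField (fun t x => v t x + w t x) a b := by
  obtain ⟨β, hβ, hvβ⟩ := hv.dominated
  obtain ⟨γ, hγ, hwγ⟩ := hw.dominated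
  exact ⟨fun x => (hv.aestronglyMeasurable x).add (hw.aestronglyMeasurable x),
    fun t ht => (hv.continuous t ht).add (hw.continuous t ht),
    fun t => β t + γ t, hβ.add hγ, fun t ht x => norm_add_le_of_le (hvβ t ht x) (hwγ t ht x)⟩

variable [NormedSpace ℝ E]

theorem const_smul (hv : IsCaratheodoryField v a b) (c : ℝ) :
    IsCaratheodoryField (fun t x => c • v t x) a b := by
  obtain ⟨β, hβ, hvβ⟩ := hv.dominated
  refine ⟨fun x => (hv.aestronglyMeasurable x).const_smul c,
    fun t ht => (hv.continuous t ht).const_smul c, fun t => |c| * β t, hβ.const_mul |c|,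
    fun t ht x => ?_⟩
  rw [norm_smul, Real.norm_eq_abs]
  exact mul_le_mul_of_nonneg_left (hvβ t ht x) (abs_nonneg c)

theorem isLipschitzCaratheodoryField_of_norm_fderiv_le (hv : IsCaratheodoryField v a b)
    {ℓ : ℝ → ℝ} (hℓ : IntegrableOn ℓ (Icc a b)) (hdiff : ∀ t ∈ Icc a b, Differentiable ℝ (v t))
    (hle : ∀ t ∈ Icc a b, ∀ x, ‖fderiv ℝ (v t) x‖ ≤ ℓ t) :
    IsLipschitzCaratheodoryField v (fun t => (ℓ t).toNNReal) a b where
  toIsCaratheodoryField := hv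
  integrableOn_lipschitzConst := hℓ.real_toNNReal
  lipschitzWith t ht := lipschitzWith_of_nnnorm_fderiv_le (hdiff t ht) fun x =>
    NNReal.le_toNNReal_of_coe_le (hle t ht x)

end IsCaratheodoryField

end Caratheodory

section Flow

variable {E : Type*} [NormedAddCommGroup E] [NormedSpace ℝ E] {v ν : ℝ → E → E} {ℓ : ℝ → ℝ≥0}
  {a b : ℝ} {p q g : ℝ → E} {Φ : ℝ → ℝ → E → E}

/-- A Carathéodory solution on `[a, b]` of `dp/dt = v(t, p)`: a continuous solution of the integral
equation, which is imposed for every initial time. -/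
structure IsIntegralSolution (v : ℝ → E → E) (a b : ℝ) (p : ℝ → E) : Prop where
  continuousOn : ContinuousOn p (Icc a b)
  integral_eq_sub : ∀ s ∈ Icc a b, ∀ t ∈ Icc a b, ∫ r in s..t, v r (p r) = p t - p s

/-- The two-parameter flow of `v` on `[a, b]`: `Φ s t x` is the position at time `t` of the
trajectory which is at `x` at time `s`; both orders of `s` and `t` are allowed. -/
structure IsIntegralFlow (v : ℝ → E → E) (a b : ℝ) (Φ : ℝ → ℝ → E → E) : Prop where
  continuousOn : ∀ s ∈ Icc a b, ∀ x, ContinuousOn (fun t => Φ s t x) (Icc a b)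
  eq_add_integral : ∀ s ∈ Icc a b, ∀ x, ∀ t ∈ Icc a b, Φ s t x = x + ∫ r in s..t, v r (Φ s r x)

/-- The factor by which, according to Grönwall's inequality, trajectories of a field with spatial
Lipschitz constant `ℓ` can separate during `[a, b]`. -/
noncomputable def gronwallFactor (ℓ : ℝ → ℝ≥0) (a b : ℝ) : ℝ :=
  Real.exp (∫ r in Icc a b, (ℓ r : ℝ))

theorem gronwallFactor_nonneg : 0 ≤ gronwallFactor ℓ a b :=
  (Real.exp_pos _).le

theorem IsIntegralFlow.apply_self (hΦ : IsIntegralFlow v a b Φ) {s : ℝ} (hs : s ∈ Icc a b)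
    (x : E) : Φ s s x = x := by
  simpa using hΦ.eq_add_integral s hs x s hs

theorem IsIntegralFlow.isIntegralSolution (hv : IsCaratheodoryField v a b)
    (hΦ : IsIntegralFlow v a b Φ) {s : ℝ} (hs : s ∈ Icc a b) (x : E) :
    IsIntegralSolution v a b (fun t => Φ s t x) where
  continuousOn := hΦ.continuousOn s hs x
  integral_eq_sub t₀ ht₀ t₁ ht₁ := by
    have hint := hv.integrableOn_comp (hΦ.continuousOn s hs x)
    rw [hΦ.eq_add_integral s hs x t₁ ht₁, hΦ.eq_add_integral s hs x t₀ ht₀, add_sub_add_left_eq_sub,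
      intervalIntegral.integral_interval_sub_left
        (intervalIntegrable_of_integrableOn_Icc hint hs ht₁)
        (intervalIntegrable_of_integrableOn_Icc hint hs ht₀)]

namespace IsLipschitzCaratheodoryField

theorem perturbed_sub_sub_integral_eq (hν : IsLipschitzCaratheodoryField ν ℓ a b)
    (hg : IntegrableOn g (Icc a b)) (hp : IsIntegralSolution (fun r x => ν r x + g r) a b p)
    (hq : IsIntegralSolution ν a b q) {s t : ℝ} (hs : s ∈ Icc a b) (ht : t ∈ Icc a b) :
    (p t - q t) - (p s - q s) - ∫ r in s..t, g r = ∫ r in s..t, (ν r (p r) - ν r (q r)) := by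
  have hνp := intervalIntegrable_of_integrableOn_Icc (hν.integrableOn_comp hp.continuousOn) hs ht
  have hνq := intervalIntegrable_of_integrableOn_Icc (hν.integrableOn_comp hq.continuousOn) hs ht
  have hpst := hp.integral_eq_sub s hs t ht
  rw [intervalIntegral.integral_add hνp (intervalIntegrable_of_integrableOn_Icc hg hs ht)] at hpst
  rw [intervalIntegral.integral_sub hνp hνq, hq.integral_eq_sub s hs t ht,
    eq_sub_of_add_eq hpst]
  abel

theorem norm_perturbed_sub_sub_integral_le (hν : IsLipschitzCaratheodoryField ν ℓ a b)
    (hg : IntegrableOn g (Icc a b)) (hp : IsIntegralSolution (fun r x => ν r x + g r) a b p)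
    (hq : IsIntegralSolution ν a b q) {s t : ℝ} (hs : s ∈ Icc a b) (ht : t ∈ Icc a b) :
    ‖(p t - q t) - (p s - q s) - ∫ r in s..t, g r‖ ≤ ∫ r in Ι s t, ℓ r * ‖p r - q r‖ := by
  rw [hν.perturbed_sub_sub_integral_eq hg hp hq hs ht]
  refine norm_intervalIntegral_le_setIntegral_uIoc ?_ fun r hr =>
    (hν.lipschitzWith r (uIoc_subset_Icc hs ht hr)).norm_sub_le _ _
  exact (hν.integrableOn_lipschitzConst.mul_continuousOn
    (hp.continuousOn.sub hq.continuousOn).norm isCompact_Icc).mono_set (uIoc_subset_Icc hs ht)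

theorem norm_perturbed_sub_le (hν : IsLipschitzCaratheodoryField ν ℓ a b)
    (hg : IntegrableOn g (Icc a b)) (hp : IsIntegralSolution (fun r x => ν r x + g r) a b p)
    (hq : IsIntegralSolution ν a b q) {s t : ℝ} (hs : s ∈ Icc a b) (ht : t ∈ Icc a b) :
    ‖p t - q t‖ ≤ (‖p s - q s‖ + ∫ r in Ι s t, ‖g r‖) * gronwallFactor ℓ a b := by
  have hst : [[s, t]] ⊆ Icc a b := uIcc_subset_Icc hs ht
  have hgst : IntegrableOn (fun r => ‖g r‖) (Ι s t) := (hg.mono_set (uIoc_subset_Icc hs ht)).norm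
  have hgron : ‖p t - q t‖ ≤
      (‖p s - q s‖ + ∫ r in Ι s t, ‖g r‖) * Real.exp (∫ r in Ι s t, (ℓ r : ℝ)) := by
    refine le_mul_exp_setIntegral_of_le_add_setIntegral (u := fun r => ‖p r - q r‖)
      ((hp.continuousOn.sub hq.continuousOn).norm.mono hst)
      (intervalIntegrable_of_integrableOn_Icc hν.integrableOn_lipschitzConst hs ht)
      (fun r _ => (ℓ r).coe_nonneg) fun r hr => ?_
    have hsr : ‖∫ x in s..r, g x‖ ≤ ∫ x in Ι s t, ‖g x‖ :=
      intervalIntegral.norm_integral_le_integral_norm_uIoc.trans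
        (setIntegral_mono_set_of_nonneg hgst (fun _ => norm_nonneg _)
          (uIoc_subset_uIoc_of_uIcc_subset_uIcc (uIcc_subset_uIcc_left hr)))
    calc ‖p r - q r‖
        = ‖(p s - q s) + (∫ x in s..r, g x)
            + ((p r - q r) - (p s - q s) - ∫ x in s..r, g x)‖ := by congr 1; abel
      _ ≤ ‖p s - q s‖ + ‖∫ x in s..r, g x‖
            + ‖(p r - q r) - (p s - q s) - ∫ x in s..r, g x‖ := norm_add₃_le
      _ ≤ _ := add_le_add (add_le_add_right hsr _)
          (hν.norm_perturbed_sub_sub_integral_le hg hp hq hs (hst hr))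
  refine hgron.trans (mul_le_mul_of_nonneg_left (Real.exp_le_exp.2 ?_)
    (add_nonneg (norm_nonneg _) (integral_nonneg fun _ => norm_nonneg _)))
  exact setIntegral_mono_set_of_nonneg hν.integrableOn_lipschitzConst
    (fun r => (ℓ r).coe_nonneg) (uIoc_subset_Icc hs ht)

theorem norm_sub_le_of_isIntegralSolution (hν : IsLipschitzCaratheodoryField ν ℓ a b)
    (hp : IsIntegralSolution ν a b p) (hq : IsIntegralSolution ν a b q)
    {s t : ℝ} (hs : s ∈ Icc a b) (ht : t ∈ Icc a b) :
    ‖p t - q t‖ ≤ gronwallFactor ℓ a b * ‖p s - q s‖ := by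
  simpa [mul_comm] using
    hν.norm_perturbed_sub_le (g := 0) (integrable_zero _ _ _) (by simpa using hp) hq hs ht

end IsLipschitzCaratheodoryField

namespace IsIntegralFlow

theorem apply_apply (hν : IsLipschitzCaratheodoryField ν ℓ a b) (hΦ : IsIntegralFlow ν a b Φ)
    {s t r : ℝ} (hs : s ∈ Icc a b) (ht : t ∈ Icc a b) (hr : r ∈ Icc a b) (x : E) :
    Φ s r (Φ t s x) = Φ t r x := by
  have hsep := hν.norm_sub_le_of_isIntegralSolution
    (hΦ.isIntegralSolution hν.toIsCaratheodoryField hs (Φ t s x))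
    (hΦ.isIntegralSolution hν.toIsCaratheodoryField ht x) hs hr
  rw [hΦ.apply_self hs, sub_self, norm_zero, mul_zero] at hsep
  exact sub_eq_zero.1 (norm_le_zero_iff.1 hsep)

theorem norm_apply_sub_apply_le (hν : IsLipschitzCaratheodoryField ν ℓ a b)
    (hΦ : IsIntegralFlow ν a b Φ) {s t : ℝ} (hs : s ∈ Icc a b) (ht : t ∈ Icc a b) (x y : E) :
    ‖Φ s t x - Φ s t y‖ ≤ gronwallFactor ℓ a b * ‖x - y‖ := by
  simpa only [hΦ.apply_self hs] using hν.norm_sub_le_of_isIntegralSolution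
    (hΦ.isIntegralSolution hν.toIsCaratheodoryField hs x)
    (hΦ.isIntegralSolution hν.toIsCaratheodoryField hs y) hs ht

theorem norm_fderiv_le (hν : IsLipschitzCaratheodoryField ν ℓ a b) (hΦ : IsIntegralFlow ν a b Φ)
    {s t : ℝ} (hs : s ∈ Icc a b) (ht : t ∈ Icc a b) (x : E) :
    ‖fderiv ℝ (Φ s t) x‖ ≤ gronwallFactor ℓ a b :=
  norm_fderiv_le_of_lip' ℝ gronwallFactor_nonneg
    (Eventually.of_forall fun y => hΦ.norm_apply_sub_apply_le hν hs ht y x)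

theorem fderiv_inverse (hν : IsLipschitzCaratheodoryField ν ℓ a b) (hΦ : IsIntegralFlow ν a b Φ)
    {s τ : ℝ} (hs : s ∈ Icc a b) (hτ : τ ∈ Icc a b) (hsτ : Differentiable ℝ (Φ s τ))
    (hτs : Differentiable ℝ (Φ τ s)) (y : E) :
    (fderiv ℝ (Φ s τ) y).inverse = fderiv ℝ (Φ τ s) (Φ s τ y) := by
  refine fderiv_inverse_eq_fderiv_of_inverse (fun z => ?_) (fun z => ?_) (hsτ y) (hτs _)
  · rw [hΦ.apply_apply hν hτ hs hs, hΦ.apply_self hs]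
  · rw [hΦ.apply_apply hν hs hτ hτ, hΦ.apply_self hτ]

theorem norm_perturbed_sub_apply_le (hν : IsLipschitzCaratheodoryField ν ℓ a b)
    (hΦ : IsIntegralFlow ν a b Φ) (hg : IntegrableOn g (Icc a b))
    (hp : IsIntegralSolution (fun r x => ν r x + g r) a b p) {σ τ : ℝ} (hσ : σ ∈ Icc a b)
    (hτ : τ ∈ Icc a b) :
    ‖p τ - Φ σ τ (p σ)‖ ≤ (∫ r in Ι σ τ, ‖g r‖) * gronwallFactor ℓ a b := by
  simpa only [hΦ.apply_self hσ, sub_self, norm_zero, zero_add] using hν.norm_perturbed_sub_le hg hp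
    (hΦ.isIntegralSolution hν.toIsCaratheodoryField hσ (p σ)) hσ hτ

theorem norm_perturbed_sub_apply_sub_integral_le (hν : IsLipschitzCaratheodoryField ν ℓ a b)
    (hΦ : IsIntegralFlow ν a b Φ) (hg : IntegrableOn g (Icc a b))
    (hp : IsIntegralSolution (fun r x => ν r x + g r) a b p) {σ τ : ℝ} (hσ : σ ∈ Icc a b)
    (hτ : τ ∈ Icc a b) :
    ‖p τ - Φ σ τ (p σ) - ∫ r in σ..τ, g r‖ ≤
      (∫ r in Ι σ τ, (ℓ r : ℝ)) * ((∫ r in Ι σ τ, ‖g r‖) * gronwallFactor ℓ a b) := by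
  have hsol := hΦ.isIntegralSolution hν.toIsCaratheodoryField hσ (p σ)
  have hsub := uIoc_subset_Icc hσ hτ
  have hrem : ‖p τ - Φ σ τ (p σ) - ∫ r in σ..τ, g r‖ ≤ ∫ r in Ι σ τ, ℓ r * ‖p r - Φ σ r (p σ)‖ := by
    simpa only [hΦ.apply_self hσ, sub_self, sub_zero] using
      hν.norm_perturbed_sub_sub_integral_le hg hp hsol hσ hτ
  refine hrem.trans ?_
  rw [← integral_mul_const]
  refine setIntegral_mono_on
    ((hν.integrableOn_lipschitzConst.mul_continuousOn
      (hp.continuousOn.sub hsol.continuousOn).norm isCompact_Icc).mono_set hsub)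
    ((hν.integrableOn_lipschitzConst.mono_set hsub).mul_const _) measurableSet_uIoc fun r hr => ?_
  refine mul_le_mul_of_nonneg_left ?_ (ℓ r).coe_nonneg
  refine (hΦ.norm_perturbed_sub_apply_le hν hg hp hσ (hsub hr)).trans
    (mul_le_mul_of_nonneg_right ?_ gronwallFactor_nonneg)
  exact setIntegral_mono_set_of_nonneg (hg.mono_set hsub).norm (fun _ => norm_nonneg _)
    (uIoc_subset_uIoc_of_uIcc_subset_uIcc (uIcc_subset_uIcc_left (uIoc_subset_uIcc hr)))

theorem hasDerivAt_apply_perturbed_self (hν : IsLipschitzCaratheodoryField ν ℓ a b)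
    (hΦ : IsIntegralFlow ν a b Φ) (hg : IntegrableOn g (Icc a b))
    (hp : IsIntegralSolution (fun r x => ν r x + g r) a b p) {τ : ℝ} (hτ : τ ∈ Ioo a b)
    (hgτ : HasDerivAt (fun σ => ∫ r in τ..σ, g r) (g τ) τ) {g' ℓ' : ℝ}
    (hngτ : HasDerivAt (fun σ => ∫ r in τ..σ, ‖g r‖) g' τ)
    (hℓτ : HasDerivAt (fun σ => ∫ r in τ..σ, (ℓ r : ℝ)) ℓ' τ) :
    HasDerivAt (fun σ => Φ σ τ (p σ)) (g τ) τ := by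
  have hprod : HasDerivAt (fun σ => (∫ r in τ..σ, (ℓ r : ℝ)) * ∫ r in τ..σ, ‖g r‖) 0 τ := by
    simpa using hℓτ.fun_mul hngτ
  -- The error is bounded by a product of two integrals, both of which vanish at `σ = τ`.
  have hrem : HasDerivAt (fun σ => p τ - Φ σ τ (p σ) - ∫ r in σ..τ, g r) 0 τ := by
    refine hasDerivAt_zero_of_norm_le (C := gronwallFactor ℓ a b) hprod (by simp) ?_
    filter_upwards [Icc_mem_nhds hτ.1 hτ.2] with σ hσ
    refine (hΦ.norm_perturbed_sub_apply_sub_integral_le hν hg hp hσ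
      (Ioo_subset_Icc_self hτ)).trans_eq ?_
    rw [norm_mul, Real.norm_eq_abs, Real.norm_eq_abs, uIoc_comm σ τ,
      abs_intervalIntegral_eq_setIntegral_uIoc fun r => (ℓ r).coe_nonneg,
      abs_intervalIntegral_eq_setIntegral_uIoc fun r => norm_nonneg _]
    ring
  have hsum := (hgτ.const_add (p τ)).sub hrem
  rw [sub_zero] at hsum
  refine hsum.congr_of_eventuallyEq (Eventually.of_forall fun σ => ?_)
  simp only [Pi.sub_apply, intervalIntegral.integral_symm σ τ]
  abel

theorem dist_apply_perturbed_le (hν : IsLipschitzCaratheodoryField ν ℓ a b)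
    (hΦ : IsIntegralFlow ν a b Φ) (hg : IntegrableOn g (Icc a b))
    (hp : IsIntegralSolution (fun r x => ν r x + g r) a b p) {s σ τ : ℝ} (hs : s ∈ Icc a b)
    (hσ : σ ∈ Icc a b) (hτ : τ ∈ Icc a b) :
    dist (Φ σ s (p σ)) (Φ τ s (p τ)) ≤ gronwallFactor ℓ a b ^ 2 * ∫ r in Ι σ τ, ‖g r‖ := by
  rw [dist_comm, dist_eq_norm]
  calc ‖Φ τ s (p τ) - Φ σ s (p σ)‖ = ‖Φ τ s (p τ) - Φ τ s (Φ σ τ (p σ))‖ := by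
        rw [hΦ.apply_apply hν hτ hσ hs]
    _ ≤ gronwallFactor ℓ a b * ‖p τ - Φ σ τ (p σ)‖ := hΦ.norm_apply_sub_apply_le hν hτ hs _ _
    _ ≤ gronwallFactor ℓ a b * ((∫ r in Ι σ τ, ‖g r‖) * gronwallFactor ℓ a b) :=
        mul_le_mul_of_nonneg_left (hΦ.norm_perturbed_sub_apply_le hν hg hp hσ hτ)
          gronwallFactor_nonneg
    _ = gronwallFactor ℓ a b ^ 2 * ∫ r in Ι σ τ, ‖g r‖ := by ring

variable [CompleteSpace E]

theorem ae_hasDerivAt_apply_perturbed (hν : IsLipschitzCaratheodoryField ν ℓ a b)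
    (hΦ : IsIntegralFlow ν a b Φ) (hg : IntegrableOn g (Icc a b))
    (hp : IsIntegralSolution (fun r x => ν r x + g r) a b p) {s : ℝ} (hs : s ∈ Icc a b)
    (hΦd : ∀ τ ∈ Icc a b, Differentiable ℝ (Φ τ s)) :
    ∀ᵐ τ, τ ∈ Icc a b → HasDerivAt (fun σ => Φ σ s (p σ)) (fderiv ℝ (Φ τ s) (p τ) (g τ)) τ := by
  filter_upwards [ae_hasDerivAt_intervalIntegral_of_integrableOn_Icc hg,
    ae_hasDerivAt_intervalIntegral_of_integrableOn_Icc hg.norm,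
    ae_hasDerivAt_intervalIntegral_of_integrableOn_Icc hν.integrableOn_lipschitzConst,
    Ioo_ae_eq_Icc.mem_iff] with τ hgτ hngτ hℓτ hmem hτ
  have hτ' : τ ∈ Ioo a b := hmem.2 hτ
  have hself := hΦ.hasDerivAt_apply_perturbed_self hν hg hp hτ' (hgτ hτ) (hngτ hτ) (hℓτ hτ)
  have hcomp := (hΦd τ hτ (Φ τ τ (p τ))).hasFDerivAt.comp_hasDerivAt τ hself
  rw [hΦ.apply_self hτ] at hcomp
  refine hcomp.congr_of_eventuallyEq ?_
  filter_upwards [Icc_mem_nhds hτ'.1 hτ'.2] with σ hσ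
  exact (hΦ.apply_apply hν hτ hσ hs (p σ)).symm

theorem integrableOn_fderiv_apply_perturbed (hν : IsLipschitzCaratheodoryField ν ℓ a b)
    (hΦ : IsIntegralFlow ν a b Φ) (hg : IntegrableOn g (Icc a b))
    (hp : IsIntegralSolution (fun r x => ν r x + g r) a b p) {s : ℝ} (hs : s ∈ Icc a b)
    (hΦd : ∀ τ ∈ Icc a b, Differentiable ℝ (Φ τ s)) :
    IntegrableOn (fun τ => fderiv ℝ (Φ τ s) (p τ) (g τ)) (Icc a b) :=
  integrableOn_of_ae_hasDerivAt_of_norm_le measurableSet_Icc (hg.norm.const_mul _)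
    (hΦ.ae_hasDerivAt_apply_perturbed hν hg hp hs hΦd) fun τ hτ =>
      (fderiv ℝ (Φ τ s) (p τ)).le_of_opNorm_le (hΦ.norm_fderiv_le hν hτ hs (p τ)) (g τ)

theorem integral_fderiv_apply_perturbed (hν : IsLipschitzCaratheodoryField ν ℓ a b)
    (hΦ : IsIntegralFlow ν a b Φ) (hg : IntegrableOn g (Icc a b))
    (hp : IsIntegralSolution (fun r x => ν r x + g r) a b p) {s t : ℝ} (hs : s ∈ Icc a b)
    (ht : t ∈ Icc a b) (hΦd : ∀ τ ∈ Icc a b, Differentiable ℝ (Φ τ s)) :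
    ∫ τ in s..t, fderiv ℝ (Φ τ s) (p τ) (g τ) = Φ t s (p t) - p s := by
  have hst := uIcc_subset_Icc hs ht
  have hgi {x y : ℝ} (hx : x ∈ [[s, t]]) (hy : y ∈ [[s, t]]) :
      IntervalIntegrable (fun r => ‖g r‖) volume x y :=
    intervalIntegrable_of_integrableOn_Icc hg.norm (hst hx) (hst hy)
  have hac : AbsolutelyContinuousOnInterval (fun σ => Φ σ s (p σ)) s t := by
    refine absolutelyContinuousOnInterval_of_dist_le (C := gronwallFactor ℓ a b ^ 2)
      ((hgi left_mem_uIcc right_mem_uIcc).absolutelyContinuousOnInterval_intervalIntegral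
        left_mem_uIcc) fun x hx y hy =>
          (hΦ.dist_apply_perturbed_le hν hg hp hs (hst hx) (hst hy)).trans_eq ?_
    rw [Real.dist_eq, intervalIntegral.integral_interval_sub_left (hgi left_mem_uIcc hx)
      (hgi left_mem_uIcc hy), abs_intervalIntegral_eq_setIntegral_uIoc fun r => norm_nonneg _,
      uIoc_comm]
  rw [integral_eq_sub_of_absolutelyContinuous_of_ae_hasDerivAt hac
    (intervalIntegrable_of_integrableOn_Icc
      (hΦ.integrableOn_fderiv_apply_perturbed hν hg hp hs hΦd) hs ht)
    ((hΦ.ae_hasDerivAt_apply_perturbed hν hg hp hs hΦd).mono fun τ h hτ => h (hst hτ)),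
    hΦ.apply_self hs]

end IsIntegralFlow

end Flow

section Perturbation

variable {E : Type*} [NormedAddCommGroup E] [NormedSpace ℝ E] {ν η : ℝ → E → E} {ℓ : ℝ → ℝ≥0}
  {a b s t : ℝ} {Φ : ℝ → ℝ → E → E} {p : ℝ → ℝ → E}

theorem tendsto_perturbed_solution (hν : IsLipschitzCaratheodoryField ν ℓ a b)
    (hη : IsCaratheodoryField η a b)
    (hp : ∀ ε : ℝ, IsIntegralSolution (fun r x => ν r x + ε • η r x) a b (p ε)) (ht : t ∈ Icc a b)
    (hpt : ∀ ε, p ε t = p 0 t) {τ : ℝ} (hτ : τ ∈ Icc a b) :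
    Tendsto (fun ε => p ε τ) (𝓝 0) (𝓝 (p 0 τ)) := by
  obtain ⟨β, hβ, hηβ⟩ := hη.dominated
  have hp0 : IsIntegralSolution ν a b (p 0) := by simpa using hp 0
  have hsub := uIoc_subset_Icc ht hτ
  have hbound (ε : ℝ) :
      ‖p ε τ - p 0 τ‖ ≤ |ε| * (∫ r in Ι t τ, β r) * gronwallFactor ℓ a b := by
    have hg := (hη.const_smul ε).integrableOn_comp (hp ε).continuousOn
    calc ‖p ε τ - p 0 τ‖ ≤ (∫ r in Ι t τ, ‖ε • η r (p ε r)‖) * gronwallFactor ℓ a b := by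
          simpa only [hpt ε, sub_self, norm_zero, zero_add] using hν.norm_perturbed_sub_le hg
            ⟨(hp ε).continuousOn, (hp ε).integral_eq_sub⟩ hp0 ht hτ
      _ ≤ |ε| * (∫ r in Ι t τ, β r) * gronwallFactor ℓ a b := by
          refine mul_le_mul_of_nonneg_right ?_ gronwallFactor_nonneg
          rw [← integral_const_mul]
          refine setIntegral_mono_on (hg.mono_set hsub).norm ((hβ.mono_set hsub).const_mul _)
            measurableSet_uIoc fun r hr => ?_
          rw [norm_smul, Real.norm_eq_abs]
          exact mul_le_mul_of_nonneg_left (hηβ r (hsub hr) _) (abs_nonneg ε)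
  refine tendsto_iff_norm_sub_tendsto_zero.2 (squeeze_zero (fun _ => norm_nonneg _) hbound ?_)
  have hcont : Continuous fun ε : ℝ => |ε| * (∫ r in Ι t τ, β r) * gronwallFactor ℓ a b := by
    fun_prop
  simpa using hcont.tendsto 0

variable [CompleteSpace E]

theorem integrableOn_fderiv_flow_perturbation (hν : IsLipschitzCaratheodoryField ν ℓ a b)
    (hη : IsCaratheodoryField η a b) (hΦ : IsIntegralFlow ν a b Φ) {q : ℝ → E} {ε : ℝ} (hε : ε ≠ 0)
    (hq : IsIntegralSolution (fun r x => ν r x + ε • η r x) a b q) (hs : s ∈ Icc a b)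
    (hΦd : ∀ τ ∈ Icc a b, Differentiable ℝ (Φ τ s)) :
    IntegrableOn (fun τ => fderiv ℝ (Φ τ s) (q τ) (η τ (q τ))) (Icc a b) := by
  have hint := hΦ.integrableOn_fderiv_apply_perturbed hν
    ((hη.const_smul ε).integrableOn_comp hq.continuousOn)
    ⟨hq.continuousOn, hq.integral_eq_sub⟩ hs hΦd
  simpa only [IntegrableOn, Pi.smul_def, map_smul, inv_smul_smul₀ hε] using hint.smul ε⁻¹

theorem smul_integral_fderiv_flow_perturbation (hν : IsLipschitzCaratheodoryField ν ℓ a b)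
    (hη : IsCaratheodoryField η a b) (hΦ : IsIntegralFlow ν a b Φ) {q : ℝ → E} {ε : ℝ}
    (hq : IsIntegralSolution (fun r x => ν r x + ε • η r x) a b q) (hs : s ∈ Icc a b)
    (ht : t ∈ Icc a b) (hΦd : ∀ τ ∈ Icc a b, Differentiable ℝ (Φ τ s)) :
    ε • ∫ τ in s..t, fderiv ℝ (Φ τ s) (q τ) (η τ (q τ)) = Φ t s (q t) - q s := by
  simpa only [map_smul, intervalIntegral.integral_smul] using hΦ.integral_fderiv_apply_perturbed hν
    ((hη.const_smul ε).integrableOn_comp hq.continuousOn)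
    ⟨hq.continuousOn, hq.integral_eq_sub⟩ hs ht hΦd

theorem tendsto_integral_fderiv_flow_perturbation (hν : IsLipschitzCaratheodoryField ν ℓ a b)
    (hη : IsCaratheodoryField η a b) (hΦ : IsIntegralFlow ν a b Φ)
    (hp : ∀ ε : ℝ, IsIntegralSolution (fun r x => ν r x + ε • η r x) a b (p ε)) (hs : s ∈ Icc a b)
    (ht : t ∈ Icc a b) (hpt : ∀ ε, p ε t = p 0 t) (hΦd : ∀ τ ∈ Icc a b, ContDiff ℝ 1 (Φ τ s)) :
    Tendsto (fun ε => ∫ τ in s..t, fderiv ℝ (Φ τ s) (p ε τ) (η τ (p ε τ))) (𝓝[≠] 0)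
      (𝓝 (∫ τ in s..t, fderiv ℝ (Φ τ s) (p 0 τ) (η τ (p 0 τ)))) := by
  obtain ⟨β, hβ, hηβ⟩ := hη.dominated
  have hsub := uIoc_subset_Icc hs ht
  refine intervalIntegral.tendsto_integral_filter_of_dominated_convergence
    (fun τ => gronwallFactor ℓ a b * β τ) ?_ ?_
    ((intervalIntegrable_of_integrableOn_Icc hβ hs ht).const_mul _) ?_
  · filter_upwards [self_mem_nhdsWithin] with ε hε
    exact ((integrableOn_fderiv_flow_perturbation hν hη hΦ hε (hp ε) hs fun τ hτ =>
      (hΦd τ hτ).differentiable one_ne_zero).mono_set hsub).aestronglyMeasurable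
  · refine Eventually.of_forall fun ε => Eventually.of_forall fun τ hτ => ?_
    exact (fderiv ℝ (Φ τ s) (p ε τ)).le_of_opNorm_le_of_le
      (hΦ.norm_fderiv_le hν (hsub hτ) hs _) (hηβ τ (hsub hτ) _)
  · refine Eventually.of_forall fun τ hτ => ?_
    have hcont : Continuous fun y => fderiv ℝ (Φ τ s) y (η τ y) :=
      ((hΦd τ (hsub hτ)).continuous_fderiv one_ne_zero).clm_apply (hη.continuous τ (hsub hτ))
    exact (hcont.tendsto _).comp
      ((tendsto_perturbed_solution hν hη hp ht hpt (hsub hτ)).mono_left nhdsWithin_le_nhds)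

theorem hasDerivAt_perturbed_solution (hν : IsLipschitzCaratheodoryField ν ℓ a b)
    (hη : IsCaratheodoryField η a b) (hΦ : IsIntegralFlow ν a b Φ)
    (hp : ∀ ε : ℝ, IsIntegralSolution (fun r x => ν r x + ε • η r x) a b (p ε)) (hs : s ∈ Icc a b)
    (ht : t ∈ Icc a b) (hpt : ∀ ε, p ε t = p 0 t) (hΦd : ∀ τ ∈ Icc a b, ContDiff ℝ 1 (Φ τ s)) :
    HasDerivAt (fun ε => p ε s) (-∫ τ in s..t, fderiv ℝ (Φ τ s) (p 0 τ) (η τ (p 0 τ))) 0 := by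
  have hincr (ε : ℝ) :
      ε • ∫ τ in s..t, fderiv ℝ (Φ τ s) (p ε τ) (η τ (p ε τ)) = Φ t s (p 0 t) - p ε s := by
    rw [← hpt ε]
    exact smul_integral_fderiv_flow_perturbation hν hη hΦ (hp ε) hs ht fun τ hτ =>
      (hΦd τ hτ).differentiable one_ne_zero
  have hp0 : Φ t s (p 0 t) = p 0 s := sub_eq_zero.1 (by rw [← hincr 0, zero_smul])
  refine hasDerivAt_iff_tendsto_slope.2
    ((tendsto_integral_fderiv_flow_perturbation hν hη hΦ hp hs ht hpt hΦd).neg.congr' ?_)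
  filter_upwards [self_mem_nhdsWithin] with ε hε
  rw [slope_def_module, sub_zero, ← neg_sub (p 0 s), ← hp0, ← hincr ε, smul_neg,
    inv_smul_smul₀ hε]

end Perturbation

theorem inverse_flow_derivative_wrt_velocity_general {E : Type*} [NormedAddCommGroup E]
    [NormedSpace ℝ E] [CompleteSpace E] {ν η : ℝ → E → E} {ℓ : ℝ → ℝ≥0} {a b : ℝ}
    (hν : IsLipschitzCaratheodoryField ν ℓ a b) (hη : IsCaratheodoryField η a b)
    {φ : ℝ → ℝ → ℝ → E → E}
    (hφ : ∀ ε : ℝ, IsIntegralFlow (fun r x => ν r x + ε • η r x) a b (φ ε))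
    (hφC1 : ∀ s ∈ Icc a b, ∀ t ∈ Icc a b, ContDiff ℝ 1 (φ 0 s t)) {s t : ℝ}
    (hs : s ∈ Icc a b) (ht : t ∈ Icc a b) (x : E) :
    HasDerivAt (fun ε => φ ε t s x)
      (-∫ τ in s..t, (fderiv ℝ (φ 0 s τ) (φ 0 t s x)).inverse (η τ (φ 0 t τ x))) 0 := by
  have hφ0 : IsIntegralFlow ν a b (φ 0) := by simpa using hφ 0
  have hsol (ε : ℝ) := (hφ ε).isIntegralSolution
    (hν.toIsCaratheodoryField.add (hη.const_smul ε)) ht x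
  have hderiv := hasDerivAt_perturbed_solution hν hη hφ0 hsol hs ht
    (fun ε => by rw [(hφ ε).apply_self ht, (hφ 0).apply_self ht]) fun τ hτ => hφC1 τ hτ s hs
  refine hderiv.congr_deriv (congrArg Neg.neg (intervalIntegral.integral_congr fun τ hτ => ?_))
  have hτ' : τ ∈ Icc a b := uIcc_subset_Icc hs ht hτ
  have hinverse := hφ0.fderiv_inverse hν hs hτ' ((hφC1 s hs τ hτ').differentiable one_ne_zero)
    ((hφC1 τ hτ' s hs).differentiable one_ne_zero) (φ 0 t s x)
  rw [hφ0.apply_apply hν hs ht hτ'] at hinverse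
  simp only [hinverse]

/-- **Derivative of the inverse flow with respect to the velocity field.**
Under the same hypotheses as the derivative-of-the-flow result (`ν, η` time-dependent `C¹`
vector fields with integrable bounds, `φ ε` the two-parameter flow of `ν + εη`, `φ 0`
spatially `C¹`), assume in addition that the spatial derivatives `Dφ(s,τ)(y)` are invertible
for all `s, τ ∈ [0,1]` and `y`.  Then for all `s, t ∈ [0,1]` and `x`, the map
`ε ↦ φ ε t s x` (the inverse flow) is differentiable at `ε = 0` with derivative
`−∫_s^t [Dφ(s,τ)(φ(t,s,x))]⁻¹ ( η(τ, φ(t,τ,x)) ) dτ`. -/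
theorem inverse_flow_derivative_wrt_velocity
    (n : ℕ)
    (ν η : ℝ → EuclideanSpace ℝ (Fin n) → EuclideanSpace ℝ (Fin n))
    (ℓ b : ℝ → ℝ)
    (hℓint : IntegrableOn ℓ (Icc (0:ℝ) 1))
    (hbint : IntegrableOn b (Icc (0:ℝ) 1))
    (hνmeas : ∀ x, AEStronglyMeasurable (fun t => ν t x) (volume.restrict (Icc (0:ℝ) 1)))
    (hηmeas : ∀ x, AEStronglyMeasurable (fun t => η t x) (volume.restrict (Icc (0:ℝ) 1)))
    (hνC1 : ∀ t ∈ Icc (0:ℝ) 1, ContDiff ℝ 1 (ν t))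
    (hηC1 : ∀ t ∈ Icc (0:ℝ) 1, ContDiff ℝ 1 (η t))
    (hνbd : ∀ t ∈ Icc (0:ℝ) 1, ∀ x, ‖ν t x‖ ≤ b t)
    (hηbd : ∀ t ∈ Icc (0:ℝ) 1, ∀ x, ‖η t x‖ ≤ b t)
    (hνder : ∀ t ∈ Icc (0:ℝ) 1, ∀ x, ‖fderiv ℝ (ν t) x‖ ≤ ℓ t)
    (hηder : ∀ t ∈ Icc (0:ℝ) 1, ∀ x, ‖fderiv ℝ (η t) x‖ ≤ ℓ t)
    (φ : ℝ → ℝ → ℝ → EuclideanSpace ℝ (Fin n) → EuclideanSpace ℝ (Fin n))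
    (hφcont : ∀ ε : ℝ, ∀ s ∈ Icc (0:ℝ) 1, ∀ x,
      ContinuousOn (fun t => φ ε s t x) (Icc (0:ℝ) 1))
    (hφ : ∀ ε : ℝ, ∀ s ∈ Icc (0:ℝ) 1, ∀ x, ∀ t ∈ Icc (0:ℝ) 1,
      φ ε s t x = x + ∫ r in s..t, (ν r (φ ε s r x) + ε • η r (φ ε s r x)))
    (hφC1 : ∀ s ∈ Icc (0:ℝ) 1, ∀ t ∈ Icc (0:ℝ) 1, ContDiff ℝ 1 (φ 0 s t))
    (hinv : ∀ s ∈ Icc (0:ℝ) 1, ∀ τ ∈ Icc (0:ℝ) 1, ∀ y,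
      ∃ e : EuclideanSpace ℝ (Fin n) ≃L[ℝ] EuclideanSpace ℝ (Fin n),
        (e : EuclideanSpace ℝ (Fin n) →L[ℝ] EuclideanSpace ℝ (Fin n))
          = fderiv ℝ (φ 0 s τ) y) :
    ∀ s ∈ Icc (0:ℝ) 1, ∀ t ∈ Icc (0:ℝ) 1, ∀ x,
      HasDerivAt (fun ε => φ ε t s x)
        (-∫ τ in s..t,
          ((fderiv ℝ (φ 0 s τ) (φ 0 t s x)).inverse) (η τ (φ 0 t τ x))) 0 := by
  intro s hs t ht x
  have hν : IsCaratheodoryField ν 0 1 :=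
    ⟨hνmeas, fun t ht => (hνC1 t ht).continuous, b, hbint, hνbd⟩
  have hη : IsCaratheodoryField η 0 1 :=
    ⟨hηmeas, fun t ht => (hηC1 t ht).continuous, b, hbint, hηbd⟩
  have hνlip := hν.isLipschitzCaratheodoryField_of_norm_fderiv_le hℓint
    (fun t ht => (hνC1 t ht).differentiable one_ne_zero) hνder
  exact inverse_flow_derivative_wrt_velocity_general hνlip hη
    (fun ε => ⟨hφcont ε, hφ ε⟩) hφC1 hs ht x
end
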